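/- Let H be a continuous map from the closed upper half-plane to the closure of Ω* which restricts to a holomorphic bijection from the open upper half-plane ℍ onto Ω*, satisfies H(0) = 0, and satisfies H(z)/z → 1 as |z| → ∞ in ℍ, and set c = (1/π) · ∫₀^∞ ( Im H(t) − (π/2)·χ_{[2,∞)}(t) ) · dt/t. Then for every fixed 0 < a < 1, the limit as m → ∞ of √m · ((1+a)/(1−a))^m · L_m(a) exists and equals e^{−c} · √2 · (1−a)/√a. -/

import Mathlib

/-!
Both sides are evaluated explicitly: the limit is `(1 - a) / √(π a)`, and `c = log √(2 π)`.

*The approximation error.* Put `q = (1 - a) / (1 + a)`. The map `x = (1 + a) / 2 * |1 + q e^{iθ}|`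
takes `[0, π]` onto `[a, 1]`, so `1 / x` is a multiple of `1 / |1 + q e^{iθ}|`, which has an explicit
cosine expansion with coefficients `f_k` (`inv_norm_eq`). Since `cos θ` is an affine function of
`x ^ 2`, truncating after `cos (m θ)` and multiplying by `x` gives an odd polynomial of degree at most
`2 m + 1`. Its deviation from `1` on `[a, 1]` is `2 f_{m+1} cos φ(θ)`, up to sign and a relative error
`O(1/m)`, where the phase `φ` runs from `0` to `(m + 1) π` (`P0_error`). This error has `m + 2` nearly
extremal points of alternating sign on `[a, 1]`, so the polynomial is nearly optimal (`Lm_le`,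
`le_Lm`), and the asymptotics of `f_{m+1}`, which rests on Wallis' product, yields `Lm_asymp`.

*The constant.* The function `u(z) = H(z) - z` satisfies `Im u = 0` on the negative axis and
`Re e^{u(t)} = e^{-t}` for `t > 0` (`IsNormMap.isCorr`); that `H` maps the two half-axes to the two
parts of the boundary of `Ω*` has to be extracted from the hypotheses (`IsNormMap.im_eq`,
`IsNormMap.eq_zero_imp`). Let `Q(ξ) = u(e^ξ) + ξ / 2 - i π / 2` on the strip `0 ≤ Im ξ ≤ π`. By a
Phragmén–Lindelöf argument `Im Q → 0` as `Re ξ → ∞` (`IsCorr.Qs_im_small`), and Cauchy's estimate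
then bounds the oscillation of `Q` on vertical segments (`IsCorr.Qs_osc`). The contour integral of
`e^Q` reduces to `∫ e^{-t} t^{-1/2} dt = √π` (`IsCorr.Θ_top`), which forces `Re Q → -log √π` along the
middle of the strip (`IsCorr.Qmid_re`). Finally the contour integral of `u(e^ξ)` expresses the
integral in the statement through this limit (`IsCorr.integral_eq`).
-/

open Filter Set

/-- The set `X(a) = [-1,-a] ∪ [a,1]`. -/
def X (a : ℝ) : Set ℝ := Icc (-1) (-a) ∪ Icc a 1

/-- The error of best uniform approximation of `sgn` on `X(a)` by real polynomials of
degree at most `2m+1`. -/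
noncomputable def Lm (m : ℕ) (a : ℝ) : ℝ :=
  sInf { r | ∃ p : Polynomial ℝ, p.natDegree ≤ 2 * m + 1 ∧
    r = sSup ((fun x => |p.eval x - Real.sign x|) '' X a) }

/-- The open upper half-plane. -/
def UHP : Set ℂ := {z | 0 < z.im}

/-- The region `Ω*`, the part of the upper half-plane above the curve
`{t + i arccos(e^{-t}) : t ≥ 0}`. -/
noncomputable def Ωstar : Set ℂ :=
  {z | 0 < z.im ∧ (z.re ≤ 0 ∨ Real.arccos (Real.exp (-z.re)) < z.im)}

/-! ### Taylor coefficients of `(1 - z)^{-1/2}` -/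

/-- The coefficient of `z ^ n` in the Taylor series of `(1 - z)^{-1/2}`. -/
noncomputable def bco (n : ℕ) : ℝ := (n.centralBinom : ℝ) / 4 ^ n

lemma bco_pos (n : ℕ) : 0 < bco n := by
  unfold bco; have := Nat.centralBinom_pos n; positivity

lemma bco_zero : bco 0 = 1 := by simp [bco]

lemma bco_succ (n : ℕ) : (n + 1) * bco (n + 1) = (n + 1 / 2) * bco n := by
  have h : ((n : ℝ) + 1) * (n + 1).centralBinom = 2 * (2 * n + 1) * n.centralBinom := by
    exact_mod_cast Nat.succ_mul_centralBinom_succ n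
  unfold bco
  rw [pow_succ]
  field_simp
  linarith

lemma bco_antitone : Antitone bco := by
  refine antitone_nat_of_succ_le fun n => ?_
  have h := bco_succ n
  have hp := bco_pos n
  have : ((n : ℝ) + 1) * bco (n + 1) ≤ (n + 1) * bco n := by rw [h]; nlinarith
  exact le_of_mul_le_mul_left this (by positivity)

lemma bco_le_one (n : ℕ) : bco n ≤ 1 := bco_zero ▸ bco_antitone (Nat.zero_le n)

lemma bco_diff (n : ℕ) : bco n - bco (n + 1) = bco n / (2 * (n + 1)) := by
  have h := bco_succ n
  have : ((n : ℝ) + 1) ≠ 0 := by positivity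
  field_simp
  linarith

/-- The partial Wallis product is, up to the factor `2 n + 1`, the inverse square of `bco n`. -/
lemma bco_wallis (n : ℕ) : Real.Wallis.W n * bco n ^ 2 * (2 * n + 1) = 1 := by
  induction n with
  | zero => simp [bco, Real.Wallis.W]
  | succ n ih =>
    have h := bco_succ n
    have h2 : bco (n + 1) = (2 * n + 1) / (2 * n + 2) * bco n := by
      field_simp; linarith
    rw [Real.Wallis.W_succ, h2]
    push_cast
    calc _ = Real.Wallis.W n * bco n ^ 2 * (2 * n + 1) := by field_simp; ring
      _ = 1 := ih

lemma bco_asymp : Tendsto (fun n : ℕ => √(n : ℝ) * bco n) atTop (nhds (1 / √Real.pi)) := by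
  have hW := Real.Wallis.tendsto_W_nhds_pi_div_two
  have h1 : Tendsto (fun n : ℕ => (n : ℝ) / ((2 * n + 1))) atTop (nhds (1 / 2)) := by
    have : Tendsto (fun n : ℕ => 1 / (2 + 1 / (n : ℝ))) atTop (nhds (1 / (2 + 0))) := by
      refine Tendsto.div tendsto_const_nhds (tendsto_const_nhds.add ?_) (by norm_num)
      exact tendsto_one_div_atTop_nhds_zero_nat
    rw [add_zero] at this
    refine this.congr' ?_
    filter_upwards [eventually_gt_atTop 0] with n hn
    have : (n : ℝ) ≠ 0 := by positivity
    field_simp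
  have h2 := (h1.div hW (by positivity)).sqrt
  have e : √(1 / 2 / (Real.pi / 2)) = 1 / √Real.pi := by
    rw [show (1 / 2 / (Real.pi / 2) : ℝ) = 1 / Real.pi by field_simp, Real.sqrt_div zero_le_one,
      Real.sqrt_one]
  rw [e] at h2
  refine h2.congr fun n => ?_
  have hw := bco_wallis n
  have hWp := Real.Wallis.W_pos n
  have hb := bco_pos n
  have e2 : √(n : ℝ) * bco n = √(n * bco n ^ 2) := by
    rw [Real.sqrt_mul (by positivity), Real.sqrt_sq hb.le]
  rw [e2]
  congr 1
  simp only [Pi.div_apply]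
  field_simp
  linear_combination (-(n : ℝ)) * hw

/-- The Cauchy square of the sequence `bco` is constantly `1`: symmetrizing the sum in the two
indices turns the recursion `bco_succ` into a recursion for the convolution. -/
lemma bco_conv (n : ℕ) : ∑ p ∈ Finset.HasAntidiagonal.antidiagonal n, bco p.1 * bco p.2 = 1 := by
  induction n with
  | zero => simp [bco_zero]
  | succ n ih =>
    have key : ∀ m : ℕ, 2 * ∑ p ∈ Finset.HasAntidiagonal.antidiagonal m, (p.1 : ℝ) * (bco p.1 * bco p.2)
        = m * ∑ p ∈ Finset.HasAntidiagonal.antidiagonal m, bco p.1 * bco p.2 := by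
      intro m
      have hs : ∑ p ∈ Finset.HasAntidiagonal.antidiagonal m, (p.1 : ℝ) * (bco p.1 * bco p.2)
          = ∑ p ∈ Finset.HasAntidiagonal.antidiagonal m, (p.2 : ℝ) * (bco p.1 * bco p.2) := by
        rw [← Finset.Nat.sum_antidiagonal_swap]
        exact Finset.sum_congr rfl fun p _ => by
          simp only [Prod.fst_swap, Prod.snd_swap]; ring
      rw [two_mul]
      nth_rewrite 2 [hs]
      rw [← Finset.sum_add_distrib, Finset.mul_sum]
      refine Finset.sum_congr rfl fun p hp => ?_
      rw [Finset.HasAntidiagonal.mem_antidiagonal] at hp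
      rw [← hp]; push_cast; ring
    have h1 := key (n + 1)
    rw [Finset.Nat.sum_antidiagonal_succ] at h1
    have h2 : ∑ p ∈ Finset.HasAntidiagonal.antidiagonal n, ((p.1 + 1 : ℕ) : ℝ) * (bco (p.1 + 1) * bco p.2)
        = ∑ p ∈ Finset.HasAntidiagonal.antidiagonal n, ((p.1 : ℝ) * (bco p.1 * bco p.2)
          + 1 / 2 * (bco p.1 * bco p.2)) := by
      refine Finset.sum_congr rfl fun p _ => ?_
      have := bco_succ p.1
      push_cast
      rw [← mul_assoc, this]; ring
    simp only at h1
    rw [h2, Finset.sum_add_distrib, ← Finset.mul_sum, ih] at h1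
    have h3 := key n
    rw [ih] at h3
    have hne : ((n : ℝ) + 1) ≠ 0 := by positivity
    have : ((n : ℝ) + 1) * ∑ p ∈ Finset.HasAntidiagonal.antidiagonal (n + 1), bco p.1 * bco p.2 = (n + 1) * 1 := by
      push_cast at h1
      linarith
    exact mul_left_cancel₀ hne this

lemma bco_summable {z : ℂ} (hz : ‖z‖ < 1) : Summable fun n => ‖(bco n : ℂ) * z ^ n‖ := by
  refine Summable.of_nonneg_of_le (fun _ => norm_nonneg _) (fun n => ?_)
    (summable_geometric_of_lt_one (norm_nonneg z) hz)
  rw [norm_mul, norm_pow, Complex.norm_real, Real.norm_of_nonneg (bco_pos n).le]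
  exact mul_le_of_le_one_left (by positivity) (bco_le_one n)

/-- The generating function of `bco` is a square root of `1 / (1 - z)`, stated without choosing
a branch. -/
lemma bco_gen {z : ℂ} (hz : ‖z‖ < 1) : (∑' n, (bco n : ℂ) * z ^ n) ^ 2 * (1 - z) = 1 := by
  have hs := bco_summable hz
  rw [sq, tsum_mul_tsum_eq_tsum_sum_antidiagonal_of_summable_norm hs hs]
  have : ∀ n, ∑ p ∈ Finset.HasAntidiagonal.antidiagonal n, (bco p.1 : ℂ) * z ^ p.1 * (bco p.2 * z ^ p.2) = z ^ n := by
    intro n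
    have h := bco_conv n
    have : ∑ p ∈ Finset.HasAntidiagonal.antidiagonal n, (bco p.1 : ℂ) * z ^ p.1 * (bco p.2 * z ^ p.2)
        = (∑ p ∈ Finset.HasAntidiagonal.antidiagonal n, (bco p.1 : ℂ) * bco p.2) * z ^ n := by
      rw [Finset.sum_mul]
      refine Finset.sum_congr rfl fun p hp => ?_
      rw [Finset.HasAntidiagonal.mem_antidiagonal] at hp
      rw [← hp, pow_add]; ring
    rw [this]
    have h' : ∑ p ∈ Finset.HasAntidiagonal.antidiagonal n, (bco p.1 : ℂ) * bco p.2 = 1 := by exact_mod_cast h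
    rw [h', one_mul]
  simp_rw [this]
  rw [tsum_geometric_of_norm_lt_one hz]
  refine inv_mul_cancel₀ (sub_ne_zero.mpr ?_)
  rintro rfl
  simp at hz

/-! ### Fourier cosine coefficients of `1 / |1 + q u|` -/

/-- The absolute size of the `k`-th Fourier coefficient of `1 / |1 + q u|` on the unit circle,
with the factor `q ^ k` removed. -/
noncomputable def gco (q : ℝ) (k : ℕ) : ℝ := ∑' j, bco j * bco (j + k) * (q ^ 2) ^ j

/-- The `k`-th Fourier coefficient of the function `1 / |1 + q u|` of `u` on the unit circle. -/
noncomputable def fco (q : ℝ) (k : ℕ) : ℝ := (-q) ^ k * gco q k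

lemma bco_sum_real {x : ℝ} (h0 : 0 ≤ x) (h1 : x < 1) :
    ∑' n, bco n * x ^ n = 1 / √(1 - x) := by
  have h : (∑' n, (bco n : ℂ) * (x : ℂ) ^ n) ^ 2 * (1 - x) = 1 :=
    bco_gen (by rw [Complex.norm_real, Real.norm_of_nonneg h0]; exact h1)
  have e : ∑' n, (bco n : ℂ) * (x : ℂ) ^ n = ((∑' n, bco n * x ^ n : ℝ) : ℂ) := by
    push_cast; rfl
  rw [e] at h
  have h' : (∑' n, bco n * x ^ n) ^ 2 * (1 - x) = 1 := by exact_mod_cast h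
  have hp : 0 ≤ ∑' n, bco n * x ^ n :=
    tsum_nonneg fun n => by have := bco_pos n; positivity
  have hx : 0 < 1 - x := by linarith
  rw [eq_div_iff (by positivity)]
  rw [← Real.sqrt_sq hp, ← Real.sqrt_mul (by positivity), h', Real.sqrt_one]

lemma gco_summable {q : ℝ} (hq0 : 0 < q) (hq1 : q < 1)
    (k : ℕ) : Summable fun j => bco j * bco (j + k) * (q ^ 2) ^ j := by
  refine Summable.of_nonneg_of_le (fun j => ?_) (fun j => ?_)
    (summable_geometric_of_lt_one (sq_nonneg q) (by nlinarith))
  · have := bco_pos j; have := bco_pos (j + k); positivity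
  · refine mul_le_of_le_one_left (by positivity) ?_
    exact mul_le_one₀ (bco_le_one j) (bco_pos _).le (bco_le_one _)

lemma gco_pos {q : ℝ} (hq0 : 0 < q) (hq1 : q < 1) (k : ℕ) : 0 < gco q k := by
  refine (gco_summable hq0 hq1 k).tsum_pos (fun j => ?_) 0 ?_
  · have := bco_pos j; have := bco_pos (j + k); positivity
  · have := bco_pos 0; have := bco_pos (0 + k); positivity

lemma gco_diff_nonneg {q : ℝ} (hq0 : 0 < q) (hq1 : q < 1) (k : ℕ) : gco q (k + 1) ≤ gco q k := by
  refine (gco_summable hq0 hq1 _).tsum_le_tsum (fun j => ?_) (gco_summable hq0 hq1 _)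
  have := bco_pos j
  have : bco (j + (k + 1)) ≤ bco (j + k) := bco_antitone (by omega)
  gcongr

lemma gco_anti {q : ℝ} (hq0 : 0 < q) (hq1 : q < 1)
    : Antitone (gco q) := antitone_nat_of_succ_le (gco_diff_nonneg hq0 hq1)

lemma gco_diff_le {q : ℝ} (hq0 : 0 < q) (hq1 : q < 1)
    (k : ℕ) : gco q k - gco q (k + 1) ≤ gco q k / (2 * (k + 1)) := by
  unfold gco
  rw [← (gco_summable hq0 hq1 k).tsum_sub (gco_summable hq0 hq1 (k + 1)), ← tsum_div_const]
  refine Summable.tsum_le_tsum (fun j => ?_)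
    ((gco_summable hq0 hq1 k).sub (gco_summable hq0 hq1 (k + 1)))
    ((gco_summable hq0 hq1 k).div_const _)
  have h := bco_diff (j + k)
  have h1 := bco_pos j
  have h2 := bco_pos (j + k)
  have e : bco j * bco (j + k) * (q ^ 2) ^ j - bco j * bco (j + (k + 1)) * (q ^ 2) ^ j
      = bco j * (q ^ 2) ^ j * (bco (j + k) / (2 * ((j + k : ℕ) + 1))) := by
    rw [← h]; rw [← add_assoc]; ring
  rw [e, show bco j * bco (j + k) * (q ^ 2) ^ j / (2 * (k + 1))
    = bco j * (q ^ 2) ^ j * (bco (j + k) / (2 * (k + 1))) by ring]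
  gcongr
  linarith [(Nat.cast_nonneg j : (0 : ℝ) ≤ j)]

lemma gco_le {q : ℝ} (hq0 : 0 < q) (hq1 : q < 1) (k : ℕ) : gco q k ≤ (1 - q ^ 2)⁻¹ := by
  rw [← tsum_geometric_of_lt_one (sq_nonneg q) (by nlinarith)]
  refine (gco_summable hq0 hq1 k).tsum_le_tsum (fun j => ?_)
    (summable_geometric_of_lt_one (sq_nonneg q) (by nlinarith))
  refine mul_le_of_le_one_left (by positivity) ?_
  exact mul_le_one₀ (bco_le_one j) (bco_pos _).le (bco_le_one _)

/-- Dominated convergence in the defining series: `√n * bco (j + n)` tends to `1 / √π` for each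
fixed `j`, and the remaining series is `∑ bco j * q ^ (2 j) = (1 - q ^ 2)^{-1/2}`. -/
lemma gco_asymp {q : ℝ} (hq0 : 0 < q) (hq1 : q < 1)
    : Tendsto (fun n : ℕ => √(n : ℝ) * gco q n) atTop
    (nhds (1 / √Real.pi * (1 / √(1 - q ^ 2)))) := by
  have hq2 : q ^ 2 < 1 := by nlinarith
  have ha := bco_asymp
  obtain ⟨M, hM⟩ := ha.bddAbove_range
  rw [← bco_sum_real (sq_nonneg q) hq2, ← tsum_mul_left]
  have : ∀ n : ℕ, √(n : ℝ) * gco q n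
      = ∑' j, √(n : ℝ) * (bco j * bco (j + n) * (q ^ 2) ^ j) := fun n => by
    rw [gco, tsum_mul_left]
  simp_rw [this]
  refine tendsto_tsum_of_dominated_convergence (bound := fun j => M * (q ^ 2) ^ j)
    ((summable_geometric_of_lt_one (sq_nonneg q) hq2).mul_left M) (fun j => ?_)
    (Eventually.of_forall fun n j => ?_)
  · have h1 : Tendsto (fun n : ℕ => √((j + n : ℕ) : ℝ) * bco (j + n)) atTop
        (nhds (1 / √Real.pi)) := by
      have := (tendsto_add_atTop_iff_nat j).mpr ha
      refine this.congr fun n => by rw [add_comm]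
    have h2 : Tendsto (fun n : ℕ => √((n : ℝ) / (j + n : ℕ))) atTop (nhds √1) := by
      refine Tendsto.sqrt ?_
      have := tendsto_natCast_div_add_atTop (𝕜 := ℝ) (j : ℝ)
      refine this.congr fun n => by push_cast; rw [add_comm]
    have h3 := ((h2.mul h1).mul_const (bco j * (q ^ 2) ^ j))
    rw [Real.sqrt_one, one_mul] at h3
    refine h3.congr' ?_
    filter_upwards [eventually_gt_atTop 0] with n hn
    have hp : (0 : ℝ) < ((j + n : ℕ) : ℝ) := by exact_mod_cast (by omega)
    rw [Real.sqrt_div (by positivity)]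
    have : √((j + n : ℕ) : ℝ) ≠ 0 := by positivity
    field_simp
  · have h1 := bco_pos j
    have h2 := bco_pos (j + n)
    rw [Real.norm_of_nonneg (by positivity)]
    have h3 : √(n : ℝ) * bco n ≤ M := hM ⟨n, rfl⟩
    have h4 : bco (j + n) ≤ bco n := bco_antitone (by omega)
    have h5 := bco_le_one j
    calc √(n : ℝ) * (bco j * bco (j + n) * (q ^ 2) ^ j)
        ≤ √(n : ℝ) * (1 * bco n * (q ^ 2) ^ j) := by gcongr
      _ = (√(n : ℝ) * bco n) * (q ^ 2) ^ j := by ring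
      _ ≤ _ := by gcongr

/-! ### The cosine expansion and its tail -/

lemma fco_summable {q : ℝ} (hq0 : 0 < q) (hq1 : q < 1) {u : ℂ} (hu : ‖u‖ = 1)
    (n : ℕ) : Summable fun k => (fco q (n + k) : ℂ) * u ^ k := by
  refine Summable.of_norm_bounded (g := fun k => q ^ n * (1 - q ^ 2)⁻¹ * q ^ k)
    ((summable_geometric_of_lt_one hq0.le hq1).mul_left _) fun k => ?_
  have h1 := gco_le hq0 hq1 (n + k)
  have h2 := (gco_pos hq0 hq1 (n + k)).le
  rw [norm_mul, norm_pow, hu, one_pow, mul_one, Complex.norm_real, fco, norm_mul, norm_pow,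
    norm_neg, Real.norm_of_nonneg hq0.le, Real.norm_of_nonneg h2, pow_add]
  calc q ^ n * q ^ k * gco q (n + k) ≤ q ^ n * q ^ k * (1 - q ^ 2)⁻¹ := by gcongr
    _ = _ := by ring

/-- The cosine expansion of `1 / |1 + q u|`. Let `β` be the Taylor coefficients of
`(1 + q u)^{-1/2}` and `S j` the series shifted by `j`. Since `S j = β j + u * S (j + 1)` and
`|u| = 1`, the terms `2 * β j * Re (S j) - β j ^ 2` equal `|S j|^2 - |S (j + 1)|^2` and telescope
to `|S 0|^2 = 1 / |1 + q u|`. Summed by diagonals, the same terms give the coefficients `fco`. -/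
lemma inv_norm_eq {q : ℝ} (hq0 : 0 < q) (hq1 : q < 1) {u : ℂ} (hu : ‖u‖ = 1)
    : 1 / ‖1 + q * u‖ = 2 * (∑' k, (fco q k : ℂ) * u ^ k).re - fco q 0 := by
  set β : ℕ → ℝ := fun j => bco j * (-q) ^ j with hβ
  have hβn : ∀ j, ‖β j‖ ≤ q ^ j := fun j => by
    rw [hβ, norm_mul, norm_pow, norm_neg, Real.norm_of_nonneg hq0.le,
      Real.norm_of_nonneg (bco_pos j).le]
    exact mul_le_of_le_one_left (by positivity) (bco_le_one j)
  have hg := summable_geometric_of_lt_one hq0.le hq1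
  have hterm : ∀ j k, ‖(β (j + k) : ℂ) * u ^ k‖ ≤ q ^ j * q ^ k := fun j k => by
    rw [norm_mul, norm_pow, hu, one_pow, mul_one, Complex.norm_real, ← pow_add]
    exact hβn _
  have hsum : ∀ j, Summable fun k => (β (j + k) : ℂ) * u ^ k := fun j =>
    Summable.of_norm_bounded (hg.mul_left _) (hterm j)
  set S : ℕ → ℂ := fun j => ∑' k, (β (j + k) : ℂ) * u ^ k with hS
  have hrec : ∀ j, S j = β j + u * S (j + 1) := fun j => by
    simp only [hS]
    rw [(hsum j).tsum_eq_zero_add, ← tsum_mul_left]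
    simp only [add_zero, pow_zero, mul_one]
    congr 1
    refine tsum_congr fun k => ?_
    rw [show j + 1 + k = j + (k + 1) by ring]; ring
  have hSn : ∀ j, ‖S j‖ ≤ q ^ j * (1 - q)⁻¹ := fun j => by
    rw [← tsum_geometric_of_lt_one hq0.le hq1, ← tsum_mul_left]
    exact tsum_of_norm_bounded (hg.mul_left _).hasSum (hterm j)
  have hstep : ∀ j, 2 * (β j * (S j).re) - β j ^ 2 = ‖S j‖ ^ 2 - ‖S (j + 1)‖ ^ 2 := fun j => by
    have e : u * S (j + 1) = S j - β j := by rw [hrec j]; ring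
    have : ‖S (j + 1)‖ = ‖S j - β j‖ := by rw [← e, norm_mul, hu, one_mul]
    rw [this, ← Complex.normSq_eq_norm_sq, ← Complex.normSq_eq_norm_sq, Complex.normSq_apply,
      Complex.normSq_apply]
    simp only [Complex.sub_re, Complex.sub_im, Complex.ofReal_re, Complex.ofReal_im]
    ring
  have hS0 : ‖S 0‖ ^ 2 = 1 / ‖1 + q * u‖ := by
    have hz : ‖-q * u‖ < 1 := by
      rw [norm_mul, norm_neg, hu, mul_one, Complex.norm_real, Real.norm_of_nonneg hq0.le]
      exact hq1
    have h := bco_gen hz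
    have e : ∑' n, (bco n : ℂ) * (-q * u) ^ n = S 0 := by
      simp only [hS, hβ]
      refine tsum_congr fun k => ?_
      rw [zero_add, mul_pow]; push_cast; ring
    rw [e] at h
    have h2 := congrArg norm h
    rw [norm_mul, norm_pow, norm_one, show (1 : ℂ) - -q * u = 1 + q * u by ring] at h2
    have : ‖1 + q * u‖ ≠ 0 := by
      intro h0; rw [h0] at h2; simp at h2
    rw [eq_div_iff this]; exact h2
  have hb2 : Summable fun j => β j ^ 2 := by
    refine Summable.of_norm_bounded hg fun j => ?_
    have := hβn j
    rw [norm_pow]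
    have h1 : q ^ j ≤ 1 := pow_le_one₀ hq0.le hq1.le
    nlinarith [norm_nonneg (β j)]
  have hb2' : ∑' j, β j ^ 2 = fco q 0 := by
    rw [fco, gco, pow_zero, one_mul]
    refine tsum_congr fun j => ?_
    simp only [hβ, add_zero]
    rw [mul_pow, ← pow_mul, ← pow_mul, mul_comm j 2, pow_mul (-q), neg_sq]; ring
  have hbSc : Summable fun j => (β j : ℂ) * S j := by
    refine Summable.of_norm_bounded (hg.mul_right (1 - q)⁻¹) fun j => ?_
    rw [norm_mul, Complex.norm_real]
    have h1 : q ^ j ≤ 1 := pow_le_one₀ hq0.le hq1.le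
    have : 0 < (1 - q)⁻¹ := inv_pos.mpr (by linarith)
    calc ‖β j‖ * ‖S j‖ ≤ q ^ j * (q ^ j * (1 - q)⁻¹) := by
          gcongr
          · exact hβn j
          · exact hSn j
      _ ≤ q ^ j * (1 * (1 - q)⁻¹) := by gcongr
      _ = _ := by ring
  have hbS : Summable fun j => β j * (S j).re := by
    have := Complex.reCLM.summable hbSc
    refine this.congr fun j => ?_
    simp
  have htel : ∑' j, (2 * (β j * (S j).re) - β j ^ 2) = ‖S 0‖ ^ 2 := by
    have hsm := (hbS.mul_left 2).sub hb2
    refine tendsto_nhds_unique hsm.hasSum.tendsto_sum_nat ?_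
    simp_rw [hstep, Finset.sum_range_sub']
    have : Tendsto (fun n => ‖S n‖ ^ 2) atTop (nhds (0 ^ 2)) := by
      refine Tendsto.pow ?_ 2
      refine squeeze_zero (fun _ => norm_nonneg _) hSn ?_
      simpa using (tendsto_pow_atTop_nhds_zero_of_lt_one hq0.le hq1).mul_const (1 - q)⁻¹
    simpa using this.const_sub (‖S 0‖ ^ 2)
  have hswap : ∑' j, β j * (S j).re = (∑' k, (fco q k : ℂ) * u ^ k).re := by
    have e1 : ∑' j, β j * (S j).re = (∑' j, (β j : ℂ) * S j).re := by
      rw [Complex.re_tsum hbSc]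
      exact tsum_congr fun j => by simp
    rw [e1]
    congr 1
    simp only [hS, ← tsum_mul_left]
    rw [Summable.tsum_comm]
    · refine tsum_congr fun k => ?_
      rw [fco, gco, ← tsum_mul_left]
      push_cast
      rw [← tsum_mul_right]
      refine tsum_congr fun j => ?_
      simp only [hβ]; push_cast
      rw [show ((q : ℂ) ^ 2) ^ j = (-q : ℂ) ^ j * (-q) ^ j by rw [← mul_pow]; ring, pow_add]
      ring
    · refine Summable.of_norm_bounded (g := fun x : ℕ × ℕ => q ^ x.1 * q ^ x.2)
        (hg.mul_of_nonneg hg (fun _ => by positivity) (fun _ => by positivity)) fun x => ?_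
      obtain ⟨k, j⟩ := x
      simp only [Function.uncurry]
      rw [norm_mul, Complex.norm_real]
      have h1 : q ^ j ≤ 1 := pow_le_one₀ hq0.le hq1.le
      calc _ ≤ q ^ j * (q ^ j * q ^ k) := by
            gcongr
            · exact hβn j
            · exact hterm j k
        _ ≤ q ^ j * (1 * q ^ k) := by gcongr
        _ = _ := by ring
  rw [← hS0, ← htel, (hbS.mul_left 2).tsum_sub hb2, tsum_mul_left, hswap, hb2']

/-- The tail of the expansion is `fco q n / (1 + q u)` up to a relative error `O(1 / n)`, because
multiplying it by `1 + q u` leaves only the first term and the small differences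
`gco q k - gco q (k + 1)`. -/
lemma tail_bound {q : ℝ} (hq0 : 0 < q) (hq1 : q < 1) {u : ℂ} (hu : ‖u‖ = 1)
    (n : ℕ) : ‖(1 + q * u) * (∑' k, (fco q (n + k) : ℂ) * u ^ k) - fco q n‖
    ≤ |fco q n| * (q / (2 * (n + 1) * (1 - q))) := by
  have h1 : |fco q n| = q ^ n * gco q n := by
    rw [fco, abs_mul, abs_pow, abs_neg, abs_of_pos hq0, abs_of_pos (gco_pos hq0 hq1 n)]
  have hs := fco_summable hq0 hq1 hu n
  have hs1 := fco_summable hq0 hq1 hu (n + 1)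
  have hg := summable_geometric_of_lt_one hq0.le hq1
  have e : (1 + q * u) * (∑' k, (fco q (n + k) : ℂ) * u ^ k) - fco q n
      = u * ∑' k, ((fco q (n + 1 + k) : ℂ) * u ^ k + q * ((fco q (n + k) : ℂ) * u ^ k)) := by
    rw [hs1.tsum_add (hs.mul_left _), tsum_mul_left, add_mul, one_mul]
    nth_rewrite 1 [hs.tsum_eq_zero_add]
    have : ∑' b, (fco q (n + (b + 1)) : ℂ) * u ^ (b + 1)
        = u * ∑' k, (fco q (n + 1 + k) : ℂ) * u ^ k := by
      rw [← tsum_mul_left]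
      refine tsum_congr fun k => ?_
      rw [show n + 1 + k = n + (k + 1) by ring]; ring
    rw [this]
    simp only [add_zero, pow_zero, mul_one]
    ring
  rw [e, norm_mul, hu, one_mul, h1]
  have hb : ∀ k, ‖(fco q (n + 1 + k) : ℂ) * u ^ k + q * ((fco q (n + k) : ℂ) * u ^ k)‖
      ≤ (q ^ (n + 1) * (gco q n / (2 * (n + 1)))) * q ^ k := fun k => by
    have e2 : (fco q (n + 1 + k) : ℂ) * u ^ k + q * ((fco q (n + k) : ℂ) * u ^ k)
        = ((-q * (-q) ^ (n + k) * (gco q (n + k + 1) - gco q (n + k)) : ℝ) : ℂ) * u ^ k := by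
      rw [show n + 1 + k = n + k + 1 by ring, fco, fco, pow_succ]; push_cast; ring
    rw [e2, norm_mul, norm_pow, hu, one_pow, mul_one, Complex.norm_real, norm_mul, norm_mul,
      norm_pow, norm_neg, Real.norm_of_nonneg hq0.le, Real.norm_eq_abs, abs_sub_comm,
      abs_of_nonneg (sub_nonneg.mpr (gco_diff_nonneg hq0 hq1 _))]
    have h3 := gco_diff_le hq0 hq1 (n + k)
    have h4 : gco q (n + k) / (2 * ((n + k : ℕ) + 1)) ≤ gco q n / (2 * (n + 1)) := by
      have := gco_anti hq0 hq1 (show n ≤ n + k by omega)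
      have := (gco_pos hq0 hq1 n).le
      push_cast
      gcongr
      linarith [(Nat.cast_nonneg k : (0 : ℝ) ≤ k)]
    calc q * q ^ (n + k) * (gco q (n + k) - gco q (n + k + 1))
        ≤ q * q ^ (n + k) * (gco q n / (2 * (n + 1))) := by gcongr; linarith
      _ = _ := by ring
  refine (tsum_of_norm_bounded (hg.mul_left _).hasSum hb).trans_eq ?_
  rw [tsum_mul_left, tsum_geometric_of_lt_one hq0.le hq1]
  have : 1 - q ≠ 0 := by linarith
  field_simp
  ring

/-! ### The near-extremal polynomial -/

/-- The ratio `q` for which `|1 + q u|`, `|u| = 1`, has range proportional to `[a, 1]`. -/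
noncomputable def qof (a : ℝ) : ℝ := (1 - a) / (1 + a)

/-- The near-extremal odd polynomial: `x` times a constant times the cosine expansion of
`1 / |1 + q e^{iθ}|` truncated after `cos (m θ)`. Here `cos (k θ)` is the Chebyshev polynomial
`T_k` of `cos θ`, and `cos θ` is an affine function of `x ^ 2` when `x = xth a θ`. -/
noncomputable def P0 (a : ℝ) (m : ℕ) : Polynomial ℝ :=
  Polynomial.X * (Polynomial.C (2 / (1 + a)) *
    (Polynomial.C 2 * ∑ k ∈ Finset.range (m + 1), Polynomial.C (fco (qof a) k) *
      (Polynomial.Chebyshev.T ℝ k).comp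
        (Polynomial.C (4 / (1 + a) ^ 2 / (2 * qof a)) * Polynomial.X ^ 2
          - Polynomial.C ((1 + qof a ^ 2) / (2 * qof a)))
      - Polynomial.C (fco (qof a) 0)))

/-- The parametrization of `[a, 1]` by the angle `θ ∈ [0, π]`, decreasing from `1` to `a`. -/
noncomputable def xth (a θ : ℝ) : ℝ := (1 + a) / 2 * ‖1 + qof a * Complex.exp (θ * Complex.I)‖

/-- The phase `N θ - arg (1 + q e^{iθ})` of the leading error term of `P0` (with `N = m + 1`). -/
noncomputable def phi (a : ℝ) (N : ℕ) (θ : ℝ) : ℝ :=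
  N * θ - (1 + qof a * Complex.exp (θ * Complex.I)).arg

lemma P0_degree (a : ℝ) (m : ℕ) : (P0 a m).natDegree ≤ 2 * m + 1 := by
  have h : ∀ k ∈ Finset.range (m + 1), (Polynomial.C (fco (qof a) k) *
      (Polynomial.Chebyshev.T ℝ k).comp
        (Polynomial.C (4 / (1 + a) ^ 2 / (2 * qof a)) * Polynomial.X ^ 2
          - Polynomial.C ((1 + qof a ^ 2) / (2 * qof a)))).natDegree ≤ 2 * m := by
    intro k hk
    refine (Polynomial.natDegree_C_mul_le _ _).trans (Polynomial.natDegree_comp_le.trans ?_)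
    have h2 : (Polynomial.C (4 / (1 + a) ^ 2 / (2 * qof a)) * Polynomial.X ^ 2
          - Polynomial.C ((1 + qof a ^ 2) / (2 * qof a))).natDegree ≤ 2 := by
      compute_degree
    rw [Polynomial.Chebyshev.natDegree_T]
    simp only [Int.natAbs_natCast]
    have := Finset.mem_range.mp hk
    calc _ ≤ k * 2 := by gcongr
      _ ≤ _ := by omega
  refine Polynomial.natDegree_mul_le.trans ?_
  have h3 : (Polynomial.X : Polynomial ℝ).natDegree ≤ 1 := Polynomial.natDegree_X_le
  have h4 := Polynomial.natDegree_C_mul_le (2 / (1 + a))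
    (Polynomial.C 2 * ∑ k ∈ Finset.range (m + 1), Polynomial.C (fco (qof a) k) *
      (Polynomial.Chebyshev.T ℝ k).comp
        (Polynomial.C (4 / (1 + a) ^ 2 / (2 * qof a)) * Polynomial.X ^ 2
          - Polynomial.C ((1 + qof a ^ 2) / (2 * qof a)))
      - Polynomial.C (fco (qof a) 0))
  have h5 := (Polynomial.natDegree_sub_C (a := fco (qof a) 0) (p := Polynomial.C 2 * ∑ k ∈ Finset.range (m + 1), Polynomial.C (fco (qof a) k) *
      (Polynomial.Chebyshev.T ℝ k).comp
        (Polynomial.C (4 / (1 + a) ^ 2 / (2 * qof a)) * Polynomial.X ^ 2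
          - Polynomial.C ((1 + qof a ^ 2) / (2 * qof a)))))
  have h6 := (Polynomial.natDegree_C_mul_le 2 _).trans (Polynomial.natDegree_sum_le_of_forall_le _ _ h)
  omega

lemma P0_neg (a : ℝ) (m : ℕ) (x : ℝ) : (P0 a m).eval (-x) = -(P0 a m).eval x := by
  simp [P0, Polynomial.eval_finsetSum]

lemma norm_sq_eq (a θ : ℝ) : ‖1 + qof a * Complex.exp (θ * Complex.I)‖ ^ 2
    = 1 + qof a ^ 2 + 2 * qof a * Real.cos θ := by
  rw [← Complex.normSq_eq_norm_sq, Complex.normSq_apply, Complex.exp_mul_I]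
  simp only [← Complex.ofReal_cos, ← Complex.ofReal_sin, Complex.add_re, Complex.mul_re, Complex.ofReal_re, Complex.ofReal_im,
    Complex.one_re, Complex.add_im, Complex.mul_im, Complex.I_re, Complex.I_im, Complex.one_im]
  linear_combination (qof a ^ 2) * Real.sin_sq_add_cos_sq θ

lemma xth_cont (a : ℝ) : Continuous (xth a) := by unfold xth; fun_prop

lemma qof_pos {a : ℝ} (ha0 : 0 < a) (ha1 : a < 1) : 0 < qof a := div_pos (by linarith) (by linarith)

lemma qof_lt {a : ℝ} (ha0 : 0 < a) (ha1 : a < 1)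
    : qof a < 1 := by rw [qof, div_lt_one (by linarith)]; linarith

lemma one_add_ne {a : ℝ} (ha0 : 0 < a) (ha1 : a < 1)
    (θ : ℝ) : 1 + qof a * Complex.exp (θ * Complex.I) ∈ Complex.slitPlane := by
  have h0 := qof_pos ha0 ha1
  have h1 := qof_lt ha0 ha1
  left
  rw [Complex.exp_mul_I]
  simp only [← Complex.ofReal_cos, ← Complex.ofReal_sin, Complex.add_re, Complex.mul_re, Complex.ofReal_re, Complex.ofReal_im,
    Complex.one_re, Complex.add_im, Complex.mul_im, Complex.I_re, Complex.I_im]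
  have := Real.neg_one_le_cos θ
  nlinarith

/-- The error of `P0` at `xth a θ` is the discarded tail of the cosine expansion. -/
lemma P0_eval {a : ℝ} (ha0 : 0 < a) (ha1 : a < 1) (m : ℕ) (θ : ℝ) : (P0 a m).eval (xth a θ) =
    1 - 2 * ‖1 + qof a * Complex.exp (θ * Complex.I)‖ * (Complex.exp (θ * Complex.I) ^ (m + 1) *
      ∑' k, (fco (qof a) (m + 1 + k) : ℂ) * Complex.exp (θ * Complex.I) ^ k).re := by
  have h0 := qof_pos ha0 ha1
  have h1 := qof_lt ha0 ha1
  set u := Complex.exp (θ * Complex.I) with hu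
  have hn : ‖u‖ = 1 := Complex.norm_exp_ofReal_mul_I θ
  have hk := inv_norm_eq h0 h1 hn
  have hne : ‖1 + qof a * u‖ ≠ 0 :=
    norm_ne_zero_iff.mpr (Complex.slitPlane_ne_zero (one_add_ne ha0 ha1 θ))
  have hs : Summable fun k => (fco (qof a) k : ℂ) * u ^ k := by
    simpa using fco_summable h0 h1 hn 0
  have hcos : 4 / (1 + a) ^ 2 / (2 * qof a) * xth a θ ^ 2 - (1 + qof a ^ 2) / (2 * qof a)
      = Real.cos θ := by
    rw [xth, mul_pow, norm_sq_eq]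
    have : 1 + a ≠ 0 := by linarith
    field_simp
    ring
  have hsplit := hs.sum_add_tsum_nat_add (m + 1)
  have htail : ∑' k, (fco (qof a) (k + (m + 1)) : ℂ) * u ^ (k + (m + 1))
      = u ^ (m + 1) * ∑' k, (fco (qof a) (m + 1 + k) : ℂ) * u ^ k := by
    rw [← tsum_mul_left]
    refine tsum_congr fun k => ?_
    rw [add_comm k, pow_add]; ring
  have hfin : (∑ k ∈ Finset.range (m + 1), (fco (qof a) k : ℂ) * u ^ k).re
      = ∑ k ∈ Finset.range (m + 1), fco (qof a) k * Real.cos (k * θ) := by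
    rw [Complex.re_sum]
    refine Finset.sum_congr rfl fun k _ => ?_
    rw [hu, ← Complex.exp_nat_mul, Complex.re_ofReal_mul,
      show (k : ℂ) * (θ * Complex.I) = ((k * θ : ℝ) : ℂ) * Complex.I by push_cast; ring,
      Complex.exp_ofReal_mul_I_re]
  rw [htail] at hsplit
  rw [← hsplit, Complex.add_re, hfin] at hk
  have hev : (P0 a m).eval (xth a θ) = ‖1 + qof a * u‖ *
      (2 * ∑ k ∈ Finset.range (m + 1), fco (qof a) k * Real.cos (k * θ) - fco (qof a) 0) := by
    simp only [P0, Polynomial.eval_mul, Polynomial.eval_X, Polynomial.eval_C, Polynomial.eval_sub,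
      Polynomial.eval_finsetSum, Polynomial.eval_comp, Polynomial.eval_pow, hcos,
      Polynomial.Chebyshev.T_real_cos, Int.cast_natCast]
    rw [xth]
    have : 1 + a ≠ 0 := by linarith
    have h : (1 + a) / 2 * (2 / (1 + a)) = 1 := by field_simp
    rw [hu]
    linear_combination (‖1 + qof a * Complex.exp (θ * Complex.I)‖ *
      (2 * ∑ k ∈ Finset.range (m + 1), fco (qof a) k * Real.cos (k * θ) - fco (qof a) 0)) * h
  rw [hev]
  have : 2 * ∑ k ∈ Finset.range (m + 1), fco (qof a) k * Real.cos (k * θ) - fco (qof a) 0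
    = 1 / ‖1 + qof a * u‖ - 2 * (u ^ (m + 1) *
      ∑' k, (fco (qof a) (m + 1 + k) : ℂ) * u ^ k).re := by rw [hk]; ring
  rw [this]
  field_simp

/-- The error of `P0` is `-2 * fco (qof a) (m + 1) * cos (phi a (m + 1) θ)`, up to a relative error
of order `1 / m`. -/
lemma P0_error {a : ℝ} (ha0 : 0 < a) (ha1 : a < 1) (m : ℕ) (θ : ℝ) :
    |(P0 a m).eval (xth a θ) - 1 + 2 * fco (qof a) (m + 1) * Real.cos (phi a (m + 1) θ)| ≤
      2 * |fco (qof a) (m + 1)| * (qof a / (2 * ((m + 1 : ℕ) + 1) * (1 - qof a))) := by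
  have h0 := qof_pos ha0 ha1
  have h1 := qof_lt ha0 ha1
  rw [P0_eval ha0 ha1]
  have hu : ‖Complex.exp (θ * Complex.I)‖ = 1 := Complex.norm_exp_ofReal_mul_I θ
  have hb := tail_bound h0 h1 hu (m + 1)
  have hw0 := Complex.slitPlane_ne_zero (one_add_ne ha0 ha1 θ)
  set w := 1 + qof a * Complex.exp (θ * Complex.I) with hw
  set F := ∑' k, (fco (qof a) (m + 1 + k) : ℂ) * Complex.exp (θ * Complex.I) ^ k
  have hn : ‖w‖ ≠ 0 := norm_ne_zero_iff.mpr hw0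
  set r := w * F - fco (qof a) (m + 1) with hr
  -- `e^{i phi}` is `u ^ (m + 1)` rotated back by the argument of `w = 1 + q u`
  have hE : Complex.exp (phi a (m + 1) θ * Complex.I)
      = Complex.exp (θ * Complex.I) ^ (m + 1) * (‖w‖ / w) := by
    have hpol : w = ‖w‖ * Complex.exp (w.arg * Complex.I) := (Complex.norm_mul_exp_arg_mul_I w).symm
    have : (‖w‖ : ℂ) / w = Complex.exp (-(w.arg * Complex.I)) := by
      rw [div_eq_iff hw0, Complex.exp_neg]
      nth_rewrite 3 [hpol]
      have := Complex.exp_ne_zero (w.arg * Complex.I)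
      field_simp
    rw [this, ← Complex.exp_nat_mul, ← Complex.exp_add, phi]
    congr 1
    push_cast
    ring
  have hcos : Real.cos (phi a (m + 1) θ)
      = (Complex.exp (θ * Complex.I) ^ (m + 1) * (‖w‖ / w)).re := by
    rw [← hE, Complex.exp_ofReal_mul_I_re]
  have hF : (‖w‖ : ℂ) * (Complex.exp (θ * Complex.I) ^ (m + 1) * F)
      = (fco (qof a) (m + 1) + r) * (Complex.exp (θ * Complex.I) ^ (m + 1) * (‖w‖ / w)) := by
    rw [hr]; field_simp; ring
  have hF2 : ‖w‖ * (Complex.exp (θ * Complex.I) ^ (m + 1) * F).re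
      = fco (qof a) (m + 1) * Real.cos (phi a (m + 1) θ)
        + (r * Complex.exp (phi a (m + 1) θ * Complex.I)).re := by
    rw [← Complex.re_ofReal_mul, hF, add_mul, Complex.add_re, Complex.re_ofReal_mul, hcos, hE]
  have e : 1 - 2 * ‖w‖ * (Complex.exp (θ * Complex.I) ^ (m + 1) * F).re - 1
      + 2 * fco (qof a) (m + 1) * Real.cos (phi a (m + 1) θ)
      = -2 * (r * Complex.exp (phi a (m + 1) θ * Complex.I)).re := by
    linear_combination (-2) * hF2
  rw [e, abs_mul]
  have h3 := (Complex.abs_re_le_norm (r * Complex.exp (phi a (m + 1) θ * Complex.I)))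
  rw [norm_mul, Complex.norm_exp_ofReal_mul_I, mul_one] at h3
  rw [show |(-2 : ℝ)| = 2 by norm_num]
  linarith

lemma xth_zero {a : ℝ} (ha0 : 0 < a) (ha1 : a < 1) : xth a 0 = 1 := by
  have h0 := qof_pos ha0 ha1
  rw [xth]
  simp only [Complex.ofReal_zero, zero_mul, Complex.exp_zero, mul_one]
  rw [show (1 : ℂ) + qof a = ((1 + qof a : ℝ) : ℂ) by push_cast; ring, Complex.norm_real,
    Real.norm_of_nonneg (by linarith), qof]
  have : 1 + a ≠ 0 := by linarith
  field_simp
  ring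

lemma xth_pi {a : ℝ} (ha0 : 0 < a) (ha1 : a < 1) : xth a Real.pi = a := by
  have h1 := qof_lt ha0 ha1
  rw [xth, Complex.exp_pi_mul_I]
  rw [show (1 : ℂ) + qof a * -1 = ((1 - qof a : ℝ) : ℂ) by push_cast; ring, Complex.norm_real,
    Real.norm_of_nonneg (by linarith), qof]
  have : 1 + a ≠ 0 := by linarith
  field_simp
  ring

lemma xth_anti {a : ℝ} (ha0 : 0 < a) (ha1 : a < 1)
    {s t : ℝ} (hs : 0 ≤ s) (hst : s < t) (ht : t ≤ Real.pi) : xth a t < xth a s := by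
  have h0 := qof_pos ha0 ha1
  have := Real.cos_lt_cos_of_nonneg_of_le_pi hs ht hst
  unfold xth
  have h2 : ‖1 + qof a * Complex.exp (t * Complex.I)‖ < ‖1 + qof a * Complex.exp (s * Complex.I)‖ := by
    refine lt_of_pow_lt_pow_left₀ 2 (norm_nonneg _) ?_
    rw [norm_sq_eq, norm_sq_eq]
    nlinarith
  exact mul_lt_mul_of_pos_left h2 (by linarith)

lemma xth_mem {a : ℝ} (ha0 : 0 < a) (ha1 : a < 1)
    {t : ℝ} (h0 : 0 ≤ t) (ht : t ≤ Real.pi) : xth a t ∈ Icc a 1 := by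
  constructor
  · rcases ht.eq_or_lt with rfl | h
    · exact (xth_pi ha0 ha1).ge
    · exact (xth_pi ha0 ha1).ge.trans (xth_anti ha0 ha1 h0 h le_rfl).le
  · rcases h0.eq_or_lt with rfl | h
    · exact (xth_zero ha0 ha1).le
    · exact (xth_anti ha0 ha1 le_rfl h ht).le.trans (xth_zero ha0 ha1).le

lemma phi_cont {a : ℝ} (ha0 : 0 < a) (ha1 : a < 1) (N : ℕ) : Continuous (phi a N) := by
  unfold phi
  refine (continuous_const.mul continuous_id).sub ?_
  rw [continuous_iff_continuousAt]
  intro θ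
  refine (Complex.continuousAt_arg (one_add_ne ha0 ha1 θ)).comp
    (f := fun θ : ℝ => 1 + qof a * Complex.exp (θ * Complex.I)) ?_
  fun_prop

lemma phi_zero {a : ℝ} (ha0 : 0 < a) (ha1 : a < 1) (N : ℕ) : phi a N 0 = 0 := by
  have h0 := qof_pos ha0 ha1
  rw [phi]
  simp only [mul_zero, Complex.ofReal_zero, zero_mul, Complex.exp_zero, mul_one]
  rw [show (1 : ℂ) + qof a = ((1 + qof a : ℝ) : ℂ) by push_cast; ring,
    Complex.arg_ofReal_of_nonneg (by linarith)]
  simp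

lemma phi_pi {a : ℝ} (ha0 : 0 < a) (ha1 : a < 1) (N : ℕ) : phi a N Real.pi = N * Real.pi := by
  have h1 := qof_lt ha0 ha1
  rw [phi, Complex.exp_pi_mul_I,
    show (1 : ℂ) + qof a * -1 = ((1 - qof a : ℝ) : ℂ) by push_cast; ring,
    Complex.arg_ofReal_of_nonneg (by linarith)]
  simp

/-- The first hitting times of the levels `j π` by the phase; they increase with `j` although the
phase itself is not known to be monotone. -/
lemma exists_nodes {a : ℝ} (ha0 : 0 < a) (ha1 : a < 1)
    (N : ℕ) : ∃ θ : ℕ → ℝ, (∀ j ≤ N, θ j ∈ Icc 0 Real.pi ∧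
    phi a N (θ j) = j * Real.pi) ∧ ∀ j < N, θ j < θ (j + 1) := by
  have hc := phi_cont ha0 ha1 N
  set S : ℕ → Set ℝ := fun j => Icc 0 Real.pi ∩ phi a N ⁻¹' {j * Real.pi} with hS
  have hcomp : ∀ j, IsCompact (S j) := fun j =>
    isCompact_Icc.inter_right (isClosed_singleton.preimage hc)
  have hne : ∀ j ≤ N, (S j).Nonempty := fun j hj => by
    have := intermediate_value_Icc Real.pi_pos.le hc.continuousOn
    rw [phi_zero ha0 ha1, phi_pi ha0 ha1] at this
    obtain ⟨θ, h1, h2⟩ := this (show (j * Real.pi) ∈ Icc 0 (N * Real.pi) from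
      ⟨by positivity, by gcongr⟩)
    exact ⟨θ, h1, h2⟩
  have hmem : ∀ j ≤ N, sInf (S j) ∈ S j := fun j hj => (hcomp j).sInf_mem (hne j hj)
  refine ⟨fun j => sInf (S j), fun j hj => hmem j hj, fun j hj => ?_⟩
  obtain ⟨h1, h2⟩ := hmem (j + 1) hj
  have h2 : phi a N (sInf (S (j + 1))) = (j + 1 : ℕ) * Real.pi := h2
  have := intermediate_value_Icc h1.1 hc.continuousOn
  rw [phi_zero ha0 ha1, h2] at this
  obtain ⟨t, h3, h4⟩ := this (show (j * Real.pi) ∈ Icc 0 (((j + 1 : ℕ) : ℝ) * Real.pi) from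
      ⟨by positivity, by gcongr; omega⟩)
  have hle : sInf (S j) ≤ t := csInf_le (hcomp j).bddBelow ⟨⟨h3.1, h3.2.trans h1.2⟩, h4⟩
  refine hle.trans_lt (lt_of_le_of_ne h3.2 ?_)
  rintro rfl
  rw [h2] at h4
  have := mul_right_cancel₀ Real.pi_ne_zero h4
  push_cast at this
  linarith

/-! ### Two-sided bounds and asymptotics of `Lm` -/

/-- A nonzero polynomial of degree `≤ 2m+1` cannot alternate in sign along both a chain of
`m+2` positive points and the reflected chain. -/
lemma no_alternation {m : ℕ} {D : Polynomial ℝ} (hD : D.natDegree ≤ 2 * m + 1) {x : ℕ → ℝ}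
    (hx : ∀ j ≤ m + 1, 0 < x j) (hlt : ∀ j < m + 1, x (j + 1) < x j) {s : ℝ}
    (h1 : ∀ j ≤ m + 1, 0 < s * (-1) ^ j * D.eval (x j))
    (h2 : ∀ j ≤ m + 1, s * (-1) ^ j * D.eval (-x j) < 0) : False := by
  have hroot : ∀ {b c : ℝ}, b < c → D.eval b * D.eval c < 0 → ∃ r ∈ Ioo b c, D.eval r = 0 := by
    intro b c hbc h
    rcases lt_or_gt_of_ne (fun h0 => by simp [h0] at h : D.eval b ≠ 0) with hb | hb
    · have hc : 0 < D.eval c := by nlinarith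
      exact intermediate_value_Ioo hbc.le D.continuous.continuousOn ⟨hb, hc⟩
    · have hc : D.eval c < 0 := by nlinarith
      exact intermediate_value_Ioo' hbc.le D.continuous.continuousOn ⟨hc, hb⟩
  have hsgn : ∀ {j : ℕ} {b c : ℝ}, (s * (-1) ^ j * b) * (s * (-1) ^ (j + 1) * c) < 0 →
      0 < c * b := by
    intro j b c h
    have e : (s * (-1) ^ j * b) * (s * (-1) ^ (j + 1) * c) = -(s * (-1) ^ j) ^ 2 * (c * b) := by
      ring
    rw [e] at h
    by_contra hcb
    nlinarith [sq_nonneg (s * (-1) ^ j), not_lt.mp hcb]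
  have hsgn' : ∀ {j : ℕ} {b c : ℝ}, 0 < (s * (-1) ^ j * b) * (s * (-1) ^ (j + 1) * c) →
      c * b < 0 := by
    intro j b c h
    have := hsgn (j := j) (b := -b) (c := c) (by linarith)
    linarith
  have hA : ∀ j : Fin (m + 1), ∃ r ∈ Ioo (x (j + 1)) (x j), D.eval r = 0 := fun j => by
    refine hroot (hlt j j.2) (hsgn' (j := j) ?_)
    exact mul_pos (h1 j j.2.le) (h1 (j + 1) j.2)
  have hB : ∀ j : Fin (m + 1), ∃ r ∈ Ioo (-x j) (-x (j + 1)), D.eval r = 0 := fun j => by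
    refine hroot (neg_lt_neg (hlt j j.2)) ?_
    rw [mul_comm]
    exact hsgn' (j := j) (mul_pos_of_neg_of_neg (h2 j j.2.le) (h2 (j + 1) j.2))
  choose r hr hr0 using hA
  choose r' hr' hr0' using hB
  have hmono : ∀ i j : ℕ, i ≤ j → j ≤ m + 1 → x j ≤ x i := by
    intro i j hij
    induction j, hij using Nat.le_induction with
    | base => exact fun _ => le_rfl
    | succ j hij ih => exact fun h => (hlt j h).le.trans (ih (by omega))
  have hra : ∀ i j : Fin (m + 1), i < j → r j < r i := fun i j hij =>
    (hr j).2.trans_le ((hmono (i + 1) j hij j.2.le).trans (hr i).1.le)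
  have hra' : ∀ i j : Fin (m + 1), i < j → r' i < r' j := fun i j hij =>
    (hr' i).2.trans_le ((neg_le_neg (hmono (i + 1) j hij j.2.le)).trans (hr' j).1.le)
  have hpos : ∀ i, 0 < r i := fun i => (hx (i + 1) i.2).trans (hr i).1
  have hneg : ∀ i, r' i < 0 := fun i => (hr' i).2.trans (neg_neg_of_pos (hx (i + 1) i.2))
  have hD0 : D = 0 := by
    refine Polynomial.eq_zero_of_natDegree_lt_card_of_eval_eq_zero D (f := Sum.elim r r') ?_ ?_ ?_
    · refine Function.Injective.sumElim ?_ ?_ ?_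
      · intro i j hij
        rcases lt_trichotomy i j with h | h | h
        · exact absurd hij (hra i j h).ne'
        · exact h
        · exact absurd hij (hra j i h).ne
      · intro i j hij
        rcases lt_trichotomy i j with h | h | h
        · exact absurd hij (hra' i j h).ne
        · exact h
        · exact absurd hij (hra' j i h).ne'
      · intro i j h
        have := hpos i; have := hneg j; linarith
    · rintro (i | i)
      · exact hr0 i
      · exact hr0' i
    · simp only [Fintype.card_sum, Fintype.card_fin]; omega
  have := h1 0 (by omega)
  rw [hD0] at this
  simp at this

/-- The upper bound provided by the polynomial `P0`. -/
lemma Lm_le {a : ℝ} (ha0 : 0 < a) (ha1 : a < 1) (m : ℕ) : Lm m a ≤ 2 * |fco (qof a) (m + 1)| *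
    (1 + qof a / (2 * ((m + 1 : ℕ) + 1) * (1 - qof a))) := by
  have hbdd : BddBelow { r | ∃ p : Polynomial ℝ, p.natDegree ≤ 2 * m + 1 ∧
      r = sSup ((fun x => |p.eval x - Real.sign x|) '' X a) } := by
    refine ⟨0, ?_⟩
    rintro r ⟨p, -, rfl⟩
    refine Real.sSup_nonneg ?_
    rintro _ ⟨x, -, rfl⟩
    exact abs_nonneg _
  refine (csInf_le hbdd ⟨P0 a m, P0_degree a m, rfl⟩).trans ?_
  have hpos : ∀ x ∈ Icc a 1, |(P0 a m).eval x - 1| ≤ 2 * |fco (qof a) (m + 1)| *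
      (1 + qof a / (2 * ((m + 1 : ℕ) + 1) * (1 - qof a))) := by
    intro x hx
    have := intermediate_value_Icc' Real.pi_pos.le (xth_cont a).continuousOn
    rw [xth_zero ha0 ha1, xth_pi ha0 ha1] at this
    obtain ⟨θ, -, rfl⟩ := this hx
    have h1 := P0_error ha0 ha1 m θ
    have h2 : |2 * fco (qof a) (m + 1) * Real.cos (phi a (m + 1) θ)| ≤
        2 * |fco (qof a) (m + 1)| := by
      rw [abs_mul, abs_mul, abs_two]
      exact mul_le_of_le_one_right (by positivity) (Real.abs_cos_le_one _)
    rw [abs_le] at *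
    constructor <;> nlinarith [h1.1, h1.2, h2.1, h2.2]
  refine csSup_le ⟨_, 1, Or.inr ⟨ha1.le, le_rfl⟩, rfl⟩ ?_
  rintro _ ⟨x, hx | hx, rfl⟩
  · have := hpos (-x) ⟨by linarith [hx.2], by linarith [hx.1]⟩
    rw [P0_neg] at this
    simp only
    rw [Real.sign_of_neg (by linarith [hx.2]), ← abs_neg,
      show -((P0 a m).eval x - -1) = -(P0 a m).eval x - 1 by ring]
    exact this
  · simp only
    rw [Real.sign_of_pos (by linarith [hx.1])]
    exact hpos x hx

/-- The lower bound, by de la Vallée Poussin's argument: a better polynomial `p` would make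
`P0 - p` alternate in sign at the points where the phase is a multiple of `π`. -/
lemma le_Lm {a : ℝ} (ha0 : 0 < a) (ha1 : a < 1) (m : ℕ) : 2 * |fco (qof a) (m + 1)| *
    (1 - qof a / (2 * ((m + 1 : ℕ) + 1) * (1 - qof a))) ≤ Lm m a := by
  refine le_csInf ⟨_, 0, by simp, rfl⟩ ?_
  rintro _ ⟨p, hp, rfl⟩
  by_contra! hlt
  set E := sSup ((fun x => |p.eval x - Real.sign x|) '' X a) with hE
  have hbdd : BddAbove ((fun x => |p.eval x - Real.sign x|) '' X a) := by
    obtain ⟨M, hM⟩ := (isCompact_Icc (a := (-1 : ℝ)) (b := 1)).exists_bound_of_continuousOn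
      p.continuous.continuousOn
    refine ⟨M + 1, ?_⟩
    rintro _ ⟨x, hx, rfl⟩
    have hx' : x ∈ Icc (-1 : ℝ) 1 := by
      rcases hx with hx | hx
      · exact ⟨hx.1, by linarith [hx.2]⟩
      · exact ⟨by linarith [hx.1], hx.2⟩
    have h1 := hM x hx'
    have h2 : |Real.sign x| ≤ 1 := by
      rcases Real.sign_apply_eq x with h | h | h <;> rw [h] <;> norm_num
    exact (abs_sub _ _).trans (add_le_add h1 h2)
  have hle : ∀ x ∈ X a, |p.eval x - Real.sign x| ≤ E := fun x hx => le_csSup hbdd ⟨x, hx, rfl⟩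
  obtain ⟨θ, hθ, hθlt⟩ := exists_nodes ha0 ha1 (m + 1)
  have hxm : ∀ j ≤ m + 1, xth a (θ j) ∈ Icc a 1 := fun j hj =>
    xth_mem ha0 ha1 (hθ j hj).1.1 (hθ j hj).1.2
  set f := fco (qof a) (m + 1) with hf
  set η := qof a / (2 * ((m + 1 : ℕ) + 1) * (1 - qof a)) with hη
  have herr : ∀ j ≤ m + 1, |(P0 a m).eval (xth a (θ j)) - 1 + 2 * f * (-1) ^ j| ≤ 2 * |f| * η :=
    fun j hj => by
      have := P0_error ha0 ha1 m (θ j)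
      rwa [(hθ j hj).2, Real.cos_nat_mul_pi] at this
  have hf0 : f ≠ 0 := mul_ne_zero (pow_ne_zero _ (neg_ne_zero.mpr (qof_pos ha0 ha1).ne'))
    (gco_pos (qof_pos ha0 ha1) (qof_lt ha0 ha1) _).ne'
  have hsq : ∀ j : ℕ, ((-1 : ℝ) ^ j) ^ 2 = 1 := fun j => by rw [← pow_mul, mul_comm, pow_mul]; simp
  have habs : ∀ j : ℕ, |(-1 : ℝ) ^ j| = 1 := fun j => by simp
  -- a perturbation of size `< 2|f|` cannot change the sign of `2 f (-1)^j`
  have hdom : ∀ (j : ℕ) (d : ℝ), |d + 2 * f * (-1) ^ j| < 2 * |f| → 0 < -f * (-1) ^ j * d := by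
    intro j d hd
    have h1 : |f * (-1) ^ j * (d + 2 * f * (-1) ^ j)| < |f| * (2 * |f|) := by
      rw [abs_mul, abs_mul, habs, mul_one]
      exact mul_lt_mul_of_pos_left hd (abs_pos.mpr hf0)
    have h2 := (abs_lt.mp h1).2
    have h3 : f * (-1) ^ j * (d + 2 * f * (-1) ^ j) = f * (-1) ^ j * d + 2 * f ^ 2 := by
      linear_combination (2 * f ^ 2) * hsq j
    have h4 : |f| * (2 * |f|) = 2 * f ^ 2 := by rw [← sq_abs f]; ring
    linarith
  refine no_alternation (m := m) (D := P0 a m - p) (x := fun j => xth a (θ j)) (s := -f)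
    ((Polynomial.natDegree_sub_le _ _).trans (max_le (P0_degree a m) hp))
    (fun j hj => ha0.trans_le (hxm j hj).1)
    (fun j hj => xth_anti ha0 ha1 (hθ j hj.le).1.1 (hθlt j hj) (hθ (j + 1) hj).1.2) ?_ ?_
  · intro j hj
    refine hdom j _ ?_
    have h1 := hle (xth a (θ j)) (Or.inr (hxm j hj))
    rw [Real.sign_of_pos (ha0.trans_le (hxm j hj).1)] at h1
    have h2 := herr j hj
    rw [Polynomial.eval_sub]
    rw [abs_le] at h1 h2
    rw [abs_lt]
    constructor <;> linarith [h1.1, h1.2, h2.1, h2.2]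
  · intro j hj
    have h0 := hxm j hj
    have h1 := hle (-xth a (θ j)) (Or.inl ⟨by linarith [h0.2], by linarith [h0.1]⟩)
    rw [Real.sign_of_neg (by linarith [h0.1])] at h1
    have h2 := herr j hj
    have := hdom j (-(P0 a m - p).eval (-xth a (θ j))) (by
      rw [Polynomial.eval_sub, P0_neg]
      rw [abs_le] at h1 h2
      rw [abs_lt]
      constructor <;> linarith [h1.1, h1.2, h2.1, h2.2])
    linarith

/-- The asymptotics with the explicit constant. -/
lemma Lm_asymp {a : ℝ} (ha0 : 0 < a) (ha1 : a < 1)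
    : Tendsto (fun m : ℕ => Real.sqrt m * ((1 + a) / (1 - a)) ^ m * Lm m a) atTop
    (nhds ((1 - a) / (√Real.pi * √a))) := by
  have h0 := qof_pos ha0 ha1
  have h1 := qof_lt ha0 ha1
  have hfco : ∀ m : ℕ, √(m : ℝ) * ((1 + a) / (1 - a)) ^ m * (2 * |fco (qof a) (m + 1)|)
      = 2 * qof a * (√(m : ℝ) * gco (qof a) (m + 1)) := fun m => by
    rw [fco, abs_mul, abs_pow, abs_neg, abs_of_pos h0, abs_of_pos (gco_pos h0 h1 _), pow_succ]
    have : ((1 + a) / (1 - a)) ^ m * qof a ^ m = 1 := by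
      rw [← mul_pow, qof]
      have : 1 - a ≠ 0 := by linarith
      have : 1 + a ≠ 0 := by linarith
      rw [show (1 + a) / (1 - a) * ((1 - a) / (1 + a)) = 1 by field_simp, one_pow]
    linear_combination (2 * √(m : ℝ) * qof a * gco (qof a) (m + 1)) * this
  have hg : Tendsto (fun m : ℕ => √(m : ℝ) * gco (qof a) (m + 1)) atTop
      (nhds (1 / √Real.pi * (1 / √(1 - qof a ^ 2)))) := by
    have h2 := (tendsto_add_atTop_iff_nat 1).mpr (gco_asymp h0 h1)
    have h3 : Tendsto (fun m : ℕ => √((m : ℝ) / (m + 1 : ℕ))) atTop (nhds √1) := by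
      refine Tendsto.sqrt ?_
      have := tendsto_natCast_div_add_atTop (𝕜 := ℝ) (1 : ℝ)
      refine this.congr fun n => by push_cast; rfl
    have h4 := h3.mul h2
    rw [Real.sqrt_one, one_mul] at h4
    refine h4.congr fun m => ?_
    rw [Real.sqrt_div (by positivity)]
    have : √((m + 1 : ℕ) : ℝ) ≠ 0 := by positivity
    field_simp
  have hη : Tendsto (fun m : ℕ => qof a / (2 * ((m + 1 : ℕ) + 1) * (1 - qof a))) atTop
      (nhds 0) := by
    have := (tendsto_const_div_atTop_nhds_zero_nat (qof a / (2 * (1 - qof a))))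
    have := (tendsto_add_atTop_iff_nat 2).mpr this
    refine this.congr fun n => ?_
    have : 1 - qof a ≠ 0 := by linarith
    push_cast
    field_simp
    ring
  have hval : 2 * qof a * (1 / √Real.pi * (1 / √(1 - qof a ^ 2))) = (1 - a) / (√Real.pi * √a) := by
    have e : 1 - qof a ^ 2 = (2 / (1 + a)) ^ 2 * a := by
      rw [qof]
      have : 1 + a ≠ 0 := by linarith
      field_simp
      ring
    have hp : 0 < 2 / (1 + a) := div_pos two_pos (by linarith)
    rw [e, Real.sqrt_mul (by positivity), Real.sqrt_sq hp.le, qof]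
    have : 1 + a ≠ 0 := by linarith
    have : √a ≠ 0 := by positivity
    have : √Real.pi ≠ 0 := by positivity
    field_simp
  have hc := hg.const_mul (2 * qof a)
  rw [hval] at hc
  have hup := hc.mul (hη.const_add 1)
  have hlo := hc.mul (hη.const_sub 1)
  rw [add_zero, mul_one] at hup
  rw [sub_zero, mul_one] at hlo
  have hr : ∀ m : ℕ, 0 ≤ √(m : ℝ) * ((1 + a) / (1 - a)) ^ m := fun m => by
    have : 0 < (1 + a) / (1 - a) := div_pos (by linarith) (by linarith)
    positivity
  refine tendsto_of_tendsto_of_tendsto_of_le_of_le hlo hup (fun m => ?_) (fun m => ?_)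
  · simp only
    rw [← hfco, mul_assoc _ (2 * _)]
    exact mul_le_mul_of_nonneg_left (le_Lm ha0 ha1 m) (hr m)
  · simp only
    rw [← hfco, mul_assoc _ (2 * _)]
    exact mul_le_mul_of_nonneg_left (Lm_le ha0 ha1 m) (hr m)

/-! ### Boundary behaviour of the normalized map -/

/-- The height of the lower boundary of `Ω*` above the real part `x`. For `x ≤ 0` it is `0`, because
`Real.arccos` of a number `≥ 1` is `0`. -/
noncomputable def bcurve (x : ℝ) : ℝ := Real.arccos (Real.exp (-x))

lemma bcurve_mono : Monotone bcurve := fun _ _ h =>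
  Real.antitone_arccos (Real.exp_le_exp.mpr (neg_le_neg h))

lemma bcurve_cont : Continuous bcurve := by unfold bcurve; fun_prop

lemma bcurve_of_nonpos {x : ℝ} (hx : x ≤ 0) : bcurve x = 0 :=
  Real.arccos_of_one_le (Real.one_le_exp (by linarith))

lemma bcurve_nonneg (x : ℝ) : 0 ≤ bcurve x := Real.arccos_nonneg _

lemma mem_Ωstar {z : ℂ} : z ∈ Ωstar ↔ bcurve z.re < z.im := by
  constructor
  · rintro ⟨h1, h2 | h2⟩
    · rwa [bcurve_of_nonpos h2]
    · exact h2
  · intro h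
    exact ⟨(bcurve_nonneg _).trans_lt h, Or.inr h⟩

lemma closure_Ωstar {z : ℂ} (h : z ∈ closure Ωstar) : bcurve z.re ≤ z.im := by
  have hc : IsClosed {z : ℂ | bcurve z.re ≤ z.im} :=
    isClosed_le (bcurve_cont.comp Complex.continuous_re) Complex.continuous_im
  exact closure_minimal (fun w hw => (mem_Ωstar.mp hw).le) hc h

lemma isOpen_UHP : IsOpen UHP := isOpen_lt continuous_const Complex.continuous_im

lemma closure_UHP : closure UHP = {z : ℂ | 0 ≤ z.im} := Complex.closure_setOfPred_lt_im 0

lemma ofReal_mem_closure (t : ℝ) : (t : ℂ) ∈ closure UHP := by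
  rw [closure_UHP]; simp

lemma convex_UHP : Convex ℝ UHP := convex_halfSpace_im_gt 0

/-- Since the boundary curve is nondecreasing, every point is joined by a horizontal segment, going
left, to the convex part of the set with nonpositive real parts. -/
lemma isPreconnected_Ωstar_ball {δ : ℝ} (hδ : 0 < δ) :
    IsPreconnected (Ωstar ∩ Metric.ball 0 δ) := by
  set Q : Set ℂ := {z | z.re ≤ 0} ∩ {z | 0 < z.im} ∩ Metric.ball 0 δ with hQ
  have hQc : Convex ℝ Q :=
    ((convex_halfSpace_re_le 0).inter (convex_halfSpace_im_gt 0)).inter (convex_ball 0 δ)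
  have hQs : Q ⊆ Ωstar ∩ Metric.ball 0 δ := fun z hz =>
    ⟨mem_Ωstar.mpr (by rw [bcurve_of_nonpos hz.1.1]; exact hz.1.2), hz.2⟩
  have hb : ∀ y : ℝ, 0 < y → y < δ → (y * Complex.I : ℂ) ∈ Q := fun y h0 h1 => by
    refine ⟨⟨by simp, by simpa using h0⟩, ?_⟩
    rw [mem_ball_zero_iff, norm_mul, Complex.norm_I, mul_one, Complex.norm_real,
      Real.norm_of_nonneg h0.le]
    exact h1
  refine isPreconnected_of_forall ((δ / 2 : ℝ) * Complex.I) ?_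
  rintro y ⟨hy, hyδ⟩
  by_cases hre : y.re ≤ 0
  · exact ⟨Q, hQs, hb _ (by linarith) (by linarith), ⟨⟨hre, hy.1⟩, hyδ⟩, hQc.isPreconnected⟩
  · push Not at hre
    rw [mem_ball_zero_iff] at hyδ
    have him : y.im < δ := (le_abs_self _).trans_lt ((Complex.abs_im_le_norm y).trans_lt hyδ)
    refine ⟨Q ∪ segment ℝ y (y.im * Complex.I), ?_, Or.inl (hb _ (by linarith) (by linarith)),
      Or.inr (left_mem_segment ℝ _ _), ?_⟩
    · refine union_subset hQs ?_
      rintro z ⟨s, t, hs, ht, hst, rfl⟩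
      have e1 : (s • y + t • (y.im * Complex.I) : ℂ).re = s * y.re := by simp
      have e2 : (s • y + t • (y.im * Complex.I) : ℂ).im = y.im := by
        simp; rw [← add_mul, hst, one_mul]
      refine ⟨mem_Ωstar.mpr ?_, ?_⟩
      · rw [e1, e2]
        exact (bcurve_mono (by nlinarith)).trans_lt (mem_Ωstar.mp hy)
      · rw [mem_ball_zero_iff]
        refine lt_of_le_of_lt ?_ hyδ
        rw [Complex.norm_def, Complex.norm_def, Complex.normSq_apply, Complex.normSq_apply, e1, e2]
        refine Real.sqrt_le_sqrt ?_
        have : s * y.re ≤ y.re := by nlinarith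
        have : 0 ≤ s * y.re := by positivity
        nlinarith
    · exact hQc.isPreconnected.union _ (hb _ hy.1 him) (right_mem_segment ℝ _ _)
        (convex_segment _ _).isPreconnected

/-- The hypotheses on `H`: continuous on the closed upper half-plane, conformal from the open upper
half-plane onto `Ω*`, and normalized at `0` and `∞`. -/
structure IsNormMap (H : ℂ → ℂ) : Prop where
  cont : ContinuousOn H (closure UHP)
  maps : MapsTo H (closure UHP) (closure Ωstar)
  holo : DifferentiableOn ℂ H UHP
  bij : BijOn H UHP Ωstar
  zero : H 0 = 0
  lim : Tendsto (fun z => H z / z) (comap (fun z : ℂ => ‖z‖) atTop ⊓ principal UHP) (nhds 1)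

namespace IsNormMap

lemma isOpen_image {H : ℂ → ℂ} (hH : IsNormMap H)
    {s : Set ℂ} (hs : s ⊆ UHP) (ho : IsOpen s) : IsOpen (H '' s) := by
  have ha : AnalyticOnNhd ℂ H UHP := hH.holo.analyticOnNhd isOpen_UHP
  rcases ha.is_constant_or_isOpen convex_UHP.isPreconnected with ⟨w, hw⟩ | h
  · exfalso
    have h1 : Complex.I ∈ UHP := by simp [UHP]
    have h2 : 2 * Complex.I ∈ UHP := by simp [UHP]
    have := hH.bij.injOn h1 h2 (by rw [hw _ h1, hw _ h2])
    have := congrArg Complex.im this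
    simp at this
  · exact h s hs ho

/-- The normalization at infinity, extended to the closed half-plane by continuity. -/
lemma small {H : ℂ → ℂ} (hH : IsNormMap H)
    {ε : ℝ} (hε : 0 < ε) : ∃ R > 0, ∀ z : ℂ, 0 ≤ z.im → R ≤ ‖z‖ →
    ‖H z - z‖ ≤ ε * ‖z‖ := by
  have h := hH.lim (Metric.closedBall_mem_nhds 1 hε)
  rw [mem_map, mem_inf_principal, mem_comap] at h
  obtain ⟨t, ht, hts⟩ := h
  obtain ⟨R, hR⟩ := mem_atTop_sets.mp ht
  refine ⟨max R 0 + 1, by positivity, fun z hz hzR => ?_⟩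
  have hzR' : max R 0 < ‖z‖ := by linarith
  have hz' : z ∈ closure UHP := by rw [closure_UHP]; exact hz
  have : NeBot (nhdsWithin z UHP) := mem_closure_iff_nhdsWithin_neBot.mp hz'
  have hc : Tendsto H (nhdsWithin z UHP) (nhds (H z)) := (hH.cont z hz').mono_left
    (nhdsWithin_mono _ subset_closure)
  have hid : Tendsto (fun w : ℂ => w) (nhdsWithin z UHP) (nhds z) := nhdsWithin_le_nhds
  refine le_of_tendsto_of_tendsto (hc.sub hid).norm (hid.norm.const_mul ε) ?_
  filter_upwards [self_mem_nhdsWithin, hid.norm.eventually (lt_mem_nhds hzR')] with w hw hwR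
  have hw0 : w ≠ 0 := by
    rintro rfl
    rw [norm_zero] at hwR
    exact absurd hwR (not_lt.mpr (le_max_right _ _))
  have h2 : H w / w ∈ Metric.closedBall (1 : ℂ) ε :=
    hts (show w ∈ _ from hR _ ((le_max_left _ _).trans hwR.le)) hw
  rw [mem_closedBall_iff_norm] at h2
  have e : H w - w = (H w / w - 1) * w := by field_simp
  rw [e, norm_mul]
  gcongr

/-- The real axis is mapped into the boundary curve. Otherwise `H t` is also the value at an interior
point `w`; as `H` is open near `w`, values of `H` at points close to `t` are taken at points near
the level of `w` as well, contradicting injectivity. -/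
lemma im_eq {H : ℂ → ℂ} (hH : IsNormMap H) (t : ℝ) : (H t).im = bcurve (H t).re := by
  refine le_antisymm ?_ (closure_Ωstar (hH.maps (ofReal_mem_closure t)))
  by_contra! hlt
  obtain ⟨w, hw, hwt⟩ := hH.bij.surjOn (mem_Ωstar.mpr hlt)
  have hw0 : 0 < w.im := hw
  set B : Set ℂ := {z | w.im / 2 < z.im} with hB
  have hBU : B ⊆ UHP := fun z hz => lt_trans (by linarith) (show w.im / 2 < z.im from hz)
  have hBo : IsOpen B := isOpen_lt continuous_const Complex.continuous_im
  have hO := hH.isOpen_image hBU hBo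
  have hmem : H t ∈ H '' B := ⟨w, show w.im / 2 < w.im by linarith, hwt⟩
  have : NeBot (nhdsWithin (t : ℂ) UHP) :=
    mem_closure_iff_nhdsWithin_neBot.mp (ofReal_mem_closure t)
  have hc : Tendsto H (nhdsWithin (t : ℂ) UHP) (nhds (H t)) :=
    (hH.cont t (ofReal_mem_closure t)).mono_left (nhdsWithin_mono _ subset_closure)
  have him : Tendsto (fun z : ℂ => z.im) (nhdsWithin (t : ℂ) UHP) (nhds 0) := by
    have := (Complex.continuous_im.tendsto (t : ℂ)).mono_left
      (nhdsWithin_le_nhds (s := UHP))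
    simpa using this
  obtain ⟨z, hz1, hz2, hz3⟩ := ((hc.eventually (hO.mem_nhds hmem)).and
    ((him.eventually (gt_mem_nhds (show (0 : ℝ) < w.im / 2 by linarith))).and
      self_mem_nhdsWithin)).exists
  obtain ⟨z', hz', he⟩ := hz1
  have := hH.bij.injOn (hBU hz') hz3 he
  subst this
  exact absurd hz2 (not_lt.mpr (le_of_lt hz'))

lemma eq_zero_of_re {H : ℂ → ℂ} (hH : IsNormMap H) {t : ℝ} (h : (H t).re = 0) : H t = 0 := by
  refine Complex.ext h ?_
  rw [hH.im_eq, h, bcurve_of_nonpos le_rfl]; rfl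

lemma ne_zero {H : ℂ → ℂ} (hH : IsNormMap H) {z : ℂ} (hz : 0 < z.im) : H z ≠ 0 := fun h => by
  have h1 := (hH.bij.mapsTo (show z ∈ UHP from hz)).1
  rw [h] at h1
  simp at h1

/-- The zeros of `H` on the real axis form an interval, by a crosscut argument. If `H x ≠ 0`, then
`H` has no zero on the closed half-circle `K` through `x` and a point `x0` left of `p`, so
`|H| ≥ δ > 0` there. The connected set `Ω* ∩ ball 0 δ` would be covered by the disjoint images of
the inside and of the outside of the half-disc, and meets both, because `p` lies inside and `r`
outside. -/
lemma zeros_between {H : ℂ → ℂ} (hH : IsNormMap H)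
    {p r x : ℝ} (hp : H p = 0) (hr : H r = 0) (hpx : p < x) (hxr : x < r) :
    H x = 0 := by
  by_contra hx
  -- a point to the left of `p` where `H` does not vanish
  obtain ⟨R, hR0, hR⟩ := hH.small (ε := 1 / 2) (by norm_num)
  set x0 : ℝ := -(R + |p| + 1) with hx0
  have hx0p : x0 < p := by have := neg_abs_le p; rw [hx0]; linarith
  have hHx0 : H x0 ≠ 0 := by
    have hpos : 0 < R + |p| + 1 := by positivity
    have hn : ‖(x0 : ℂ)‖ = R + |p| + 1 := by
      rw [Complex.norm_real, hx0, norm_neg, Real.norm_of_nonneg hpos.le]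
    intro h
    have := hR x0 (by simp) (by rw [hn]; have := abs_nonneg p; linarith)
    rw [h, zero_sub, norm_neg, hn] at this
    linarith
  set c : ℝ := (x0 + x) / 2 with hc
  set ρ : ℝ := (x - x0) / 2 with hρ
  set K : Set ℂ := Metric.sphere (c : ℂ) ρ ∩ {z | 0 ≤ z.im} with hK
  have hKc : IsCompact K := (isCompact_sphere _ _).inter_right
    (isClosed_le continuous_const Complex.continuous_im)
  have hKn : ∀ z ∈ K, H z ≠ 0 := by
    rintro z ⟨hz1, hz2⟩
    rcases (show 0 ≤ z.im from hz2).eq_or_lt with h0 | h0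
    · have hzr : z = (z.re : ℂ) := Complex.ext rfl (by simp [← h0])
      rw [hzr] at hz1 ⊢
      rw [mem_sphere_iff_norm, ← Complex.ofReal_sub, Complex.norm_real, Real.norm_eq_abs] at hz1
      rcases eq_or_eq_neg_of_abs_eq hz1 with h | h
      · rw [show z.re = x by linarith]; exact hx
      · rw [show z.re = x0 by linarith]; exact hHx0
    · exact hH.ne_zero h0
  have hKne : K.Nonempty := ⟨x, by
    rw [hK]; refine ⟨?_, by simp⟩
    rw [mem_sphere_iff_norm, ← Complex.ofReal_sub, Complex.norm_real, Real.norm_of_nonneg] <;>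
    linarith⟩
  have hcK : ContinuousOn (fun z => ‖H z‖) K := (hH.cont.mono (fun z hz => by
    rw [closure_UHP]; exact hz.2)).norm
  obtain ⟨z0, hz0, hmin⟩ := hKc.exists_isMinOn hKne hcK
  set δ := ‖H z0‖ with hδ
  have hδ0 : 0 < δ := norm_pos_iff.mpr (hKn z0 hz0)
  have hpre := isPreconnected_Ωstar_ball hδ0
  set U : Set ℂ := UHP ∩ Metric.ball (c : ℂ) ρ with hU
  set V : Set ℂ := UHP ∩ (Metric.closedBall (c : ℂ) ρ)ᶜ with hV
  have hUo : IsOpen U := isOpen_UHP.inter Metric.isOpen_ball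
  have hVo : IsOpen V := isOpen_UHP.inter Metric.isClosed_closedBall.isOpen_compl
  have hcov : Ωstar ∩ Metric.ball 0 δ ⊆ H '' U ∪ H '' V := by
    rintro s ⟨hs1, hs2⟩
    obtain ⟨z, hz, rfl⟩ := hH.bij.surjOn hs1
    rcases lt_trichotomy (dist z c) ρ with h | h | h
    · exact Or.inl ⟨z, ⟨hz, h⟩, rfl⟩
    · exfalso
      have := hmin (show z ∈ K from ⟨h, le_of_lt (show 0 < z.im from hz)⟩)
      rw [mem_ball_zero_iff] at hs2
      exact absurd hs2 (not_lt.mpr this)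
    · exact Or.inr ⟨z, ⟨hz, by simpa using h⟩, rfl⟩
  have hnear : ∀ (t : ℝ) (W : Set ℂ), H t = 0 → IsOpen W → (t : ℂ) ∈ W →
      ((Ωstar ∩ Metric.ball 0 δ) ∩ H '' (UHP ∩ W)).Nonempty := by
    intro t W ht hW htW
    have : NeBot (nhdsWithin (t : ℂ) UHP) :=
      mem_closure_iff_nhdsWithin_neBot.mp (ofReal_mem_closure t)
    have hct : Tendsto H (nhdsWithin (t : ℂ) UHP) (nhds (H t)) :=
      (hH.cont t (ofReal_mem_closure t)).mono_left (nhdsWithin_mono _ subset_closure)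
    rw [ht] at hct
    have hWe : ∀ᶠ z in nhdsWithin (t : ℂ) UHP, z ∈ W := nhdsWithin_le_nhds (hW.mem_nhds htW)
    obtain ⟨z, hz1, hz2, hz3⟩ := ((hct.eventually (Metric.ball_mem_nhds 0 hδ0)).and
      (hWe.and self_mem_nhdsWithin)).exists
    exact ⟨H z, ⟨hH.bij.mapsTo hz3, hz1⟩, z, ⟨hz3, hz2⟩, rfl⟩
  have h1 := hnear p _ hp Metric.isOpen_ball (show (p : ℂ) ∈ Metric.ball (c : ℂ) ρ by
    rw [mem_ball_iff_norm, ← Complex.ofReal_sub, Complex.norm_real, Real.norm_eq_abs, abs_lt]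
    constructor <;> linarith)
  have h2 := hnear r _ hr Metric.isClosed_closedBall.isOpen_compl
    (show (r : ℂ) ∈ (Metric.closedBall (c : ℂ) ρ)ᶜ by
      rw [mem_compl_iff, mem_closedBall_iff_norm, ← Complex.ofReal_sub, Complex.norm_real,
        Real.norm_eq_abs, abs_le]
      rintro ⟨-, h⟩
      linarith)
  obtain ⟨s, -, ⟨z, hz, rfl⟩, ⟨z', hz', he⟩⟩ := hpre _ _
    (hH.isOpen_image inter_subset_left hUo) (hH.isOpen_image inter_subset_left hVo) hcov h1 h2
  have := hH.bij.injOn hz'.1 hz.1 he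
  subst this
  exact hz'.2 (Metric.ball_subset_closedBall hz.2)

/-- A nonvanishing `H` cannot be zero on a boundary interval: apply the maximum principle on the
half-disc over the interval to `H` times the `n`-th power of an exponential weight. The weight is
at most `1` in modulus on the half-circle and `H` vanishes on the diameter, but at the interior
point `p + i ρ / 2` the weight grows like `exp (n ρ ^ 2 / 4)`. -/
lemma not_zero_interval {H : ℂ → ℂ} (hH : IsNormMap H) {p ρ : ℝ} (hρ : 0 < ρ) :
    ¬ ∀ x : ℝ, |x - p| ≤ ρ → H x = 0 := by
  intro h
  set U : Set ℂ := Metric.ball (p : ℂ) ρ ∩ UHP with hU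
  have hcl : closure U ⊆ Metric.closedBall (p : ℂ) ρ ∩ {z | 0 ≤ z.im} := by
    refine (closure_inter_subset_inter_closure _ _).trans ?_
    rw [closure_UHP]
    exact inter_subset_inter_left _ Metric.closure_ball_subset_closedBall
  have hclU : closure U ⊆ closure UHP := closure_mono inter_subset_right
  have hb : Bornology.IsBounded U := Metric.isBounded_ball.subset inter_subset_left
  obtain ⟨C, hC⟩ := hb.isCompact_closure.exists_bound_of_continuousOn (hH.cont.mono hclU)
  set w : ℂ := p + (ρ / 2 : ℝ) * Complex.I with hw
  have hwi : w.im = ρ / 2 := by simp [hw]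
  have hwU : w ∈ U := by
    refine ⟨?_, show 0 < w.im by rw [hwi]; linarith⟩
    rw [mem_ball_iff_norm, hw, add_sub_cancel_left, norm_mul, Complex.norm_I, mul_one,
      Complex.norm_real, Real.norm_of_nonneg] <;> linarith
  have key : ∀ n : ℕ, ‖H w‖ * Real.exp (n * (ρ ^ 2 / 4)) ≤ C := by
    intro n
    set f : ℂ → ℂ := fun z => H z * Complex.exp (n * (-(z - p) ^ 2
      + Complex.I * (2 * ρ) * (z - p) + ρ ^ 2)) with hf
    have hre : ∀ z : ℂ, ‖f z‖ = ‖H z‖ * Real.exp (n * (-(z.re - p) ^ 2 + z.im ^ 2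
        - 2 * ρ * z.im + ρ ^ 2)) := by
      intro z
      rw [hf]
      simp only [norm_mul, Complex.norm_exp]
      congr 2
      simp [pow_two]
      ring_nf
      tauto
    have hfd : DiffContOnCl ℂ f U := by
      refine ⟨?_, ?_⟩
      · refine (hH.holo.mono inter_subset_right).mul ?_
        fun_prop
      · refine (hH.cont.mono hclU).mul ?_
        fun_prop
    have hfr : ∀ z ∈ frontier U, ‖f z‖ ≤ C := by
      intro z hz
      have hzc := hcl hz.1
      rw [hre]
      have hC0 := hC z hz.1
      by_cases h0 : z.im = 0
      · have hzr : z = (z.re : ℂ) := Complex.ext rfl (by simp [h0])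
        have : H z = 0 := by
          rw [hzr]
          refine h _ ?_
          have h1 := hzc.1
          rwa [hzr, mem_closedBall_iff_norm, ← Complex.ofReal_sub, Complex.norm_real,
            Real.norm_eq_abs] at h1
        rw [this, norm_zero, zero_mul]
        exact (norm_nonneg _).trans hC0
      · have him : 0 < z.im := lt_of_le_of_ne hzc.2 (Ne.symm h0)
        have hnb : z ∉ Metric.ball (p : ℂ) ρ := fun hb => hz.2 (by
          rw [(Metric.isOpen_ball.inter isOpen_UHP).interior_eq]
          exact ⟨hb, him⟩)
        have hd : ‖z - p‖ = ρ := by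
          rw [mem_ball_iff_norm, not_lt] at hnb
          exact le_antisymm (mem_closedBall_iff_norm.mp hzc.1) hnb
        have hsq : (z.re - p) ^ 2 + z.im ^ 2 = ρ ^ 2 := by
          rw [← hd, ← Complex.normSq_eq_norm_sq, Complex.normSq_apply]
          simp; ring
        refine (mul_le_of_le_one_right (norm_nonneg _) ?_).trans hC0
        rw [Real.exp_le_one_iff]
        refine mul_nonpos_of_nonneg_of_nonpos (by positivity) ?_
        have : z.im ≤ ρ := by nlinarith [sq_nonneg (z.re - p)]
        nlinarith
    have := Complex.norm_le_of_forall_mem_frontier_norm_le hb hfd hfr (subset_closure hwU)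
    rw [hre, hwi] at this
    have e : w.re - p = 0 := by simp [hw]
    rw [e] at this
    convert this using 4
    ring
  have hpos : 0 < ‖H w‖ := norm_pos_iff.mpr (hH.ne_zero hwU.2)
  obtain ⟨n, hn⟩ := exists_nat_gt (C / (‖H w‖ * (ρ ^ 2 / 4)))
  rw [div_lt_iff₀ (by positivity)] at hn
  have h1 := Real.add_one_le_exp (n * (ρ ^ 2 / 4))
  have := key n
  nlinarith

/-- The origin is the only boundary zero: a second one would force an interval of zeros. -/
lemma eq_zero_imp {H : ℂ → ℂ} (hH : IsNormMap H) {t : ℝ} (ht : H t = 0) : t = 0 := by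
  by_contra hne
  have hz : H (0 : ℝ) = 0 := by simpa using hH.zero
  have aux : ∀ p r : ℝ, p < r → H p = 0 → H r = 0 → False := by
    intro p r hpr hp hr
    refine hH.not_zero_interval (p := (p + r) / 2) (ρ := (r - p) / 4) (by linarith) ?_
    intro x hx
    rw [abs_le] at hx
    exact hH.zeros_between hp hr (by linarith) (by linarith)
  rcases lt_or_gt_of_ne hne with h | h
  · exact aux _ _ h ht hz
  · exact aux _ _ h hz ht

lemma cont_real {H : ℂ → ℂ} (hH : IsNormMap H) : Continuous fun t : ℝ => H t := by
  rw [← continuousOn_univ]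
  exact hH.cont.comp Complex.continuous_ofReal.continuousOn fun t _ => ofReal_mem_closure t

/-- `Re H` is eventually comparable with the identity on the real axis. -/
lemma re_near {H : ℂ → ℂ} (hH : IsNormMap H)
    : ∃ R > 0, ∀ t : ℝ, R ≤ |t| → |(H t).re - t| ≤ |t| / 2 := by
  obtain ⟨R, hR0, hR⟩ := hH.small (ε := 1 / 2) (by norm_num)
  refine ⟨R, hR0, fun t ht => ?_⟩
  have h1 := hR t (by simp) (by rwa [Complex.norm_real, Real.norm_eq_abs])
  rw [Complex.norm_real, Real.norm_eq_abs] at h1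
  have h2 := Complex.abs_re_le_norm (H t - t)
  rw [Complex.sub_re, Complex.ofReal_re] at h2
  linarith

/-- By the intermediate value theorem: `Re (H t)` does not vanish for `t ≠ 0` and is comparable
with `t` near infinity. -/
lemma re_pos {H : ℂ → ℂ} (hH : IsNormMap H) {t : ℝ} (ht : 0 < t) : 0 < (H t).re := by
  by_contra! hle
  obtain ⟨R, hR0, hR⟩ := hH.re_near
  have h1 := hR (max R t) (by rw [abs_of_pos (by positivity)]; exact le_max_left _ _)
  rw [abs_of_pos (show 0 < max R t by positivity)] at h1
  have h2 : 0 < (H (max R t : ℝ)).re := by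
    have : 0 < max R t := by positivity
    linarith [(abs_le.mp h1).1]
  obtain ⟨s, hs, hs0⟩ := intermediate_value_Icc (le_max_right R t)
    (Complex.continuous_re.comp hH.cont_real).continuousOn ⟨hle, h2.le⟩
  have := hH.eq_zero_imp (hH.eq_zero_of_re hs0)
  linarith [hs.1]

lemma re_neg {H : ℂ → ℂ} (hH : IsNormMap H) {t : ℝ} (ht : t < 0) : (H t).re < 0 := by
  by_contra! hle
  obtain ⟨R, hR0, hR⟩ := hH.re_near
  have hm : min (-R) t < 0 := by rw [min_lt_iff]; right; exact ht
  have h1 := hR (min (-R) t) (by rw [abs_of_neg hm]; linarith [min_le_left (-R) t])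
  rw [abs_of_neg hm] at h1
  have h2 : (H (min (-R) t : ℝ)).re < 0 := by linarith [(abs_le.mp h1).2]
  obtain ⟨s, hs, hs0⟩ := intermediate_value_Icc (min_le_right (-R) t)
    (Complex.continuous_re.comp hH.cont_real).continuousOn ⟨h2.le, hle⟩
  have := hH.eq_zero_imp (hH.eq_zero_of_re hs0)
  linarith [hs.2]

end IsNormMap

/-- The properties of the correction `u(z) = H(z) - z` on the closed upper half-plane that determine
the integral of its imaginary part. -/
structure IsCorr (u : ℂ → ℂ) : Prop where
  cont : ContinuousOn u {z | 0 ≤ z.im}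
  holo : DifferentiableOn ℂ u {z | 0 < z.im}
  zero : u 0 = 0
  small : ∀ ε > 0, ∃ R > 0, ∀ z : ℂ, 0 ≤ z.im → R ≤ ‖z‖ → ‖u z‖ ≤ ε * ‖z‖
  neg : ∀ t : ℝ, t < 0 → (u t).im = 0
  im_nonneg : ∀ t : ℝ, 0 < t → 0 ≤ (u t).im
  im_le : ∀ t : ℝ, 0 < t → (u t).im ≤ Real.pi / 2
  exp_re : ∀ t : ℝ, 0 < t → (Complex.exp (u t)).re = Real.exp (-t)
  lim : Tendsto (fun t : ℝ => (u t).im) atTop (nhds (Real.pi / 2))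

/-- For `t > 0` the boundary relation `Im H = arccos (e^{-Re H})` takes the linear form
`Re e^{u(t)} = e^{-t}`. -/
lemma IsNormMap.isCorr {H : ℂ → ℂ} (hH : IsNormMap H) : IsCorr fun z => H z - z where
  cont := by
    have := hH.cont
    rw [closure_UHP] at this
    exact this.sub continuousOn_id
  holo := hH.holo.sub differentiableOn_id
  zero := by rw [hH.zero, sub_zero]
  small := fun ε hε => hH.small hε
  neg := fun t ht => by
    rw [Complex.sub_im, Complex.ofReal_im, sub_zero, hH.im_eq, bcurve_of_nonpos (hH.re_neg ht).le]
  im_nonneg := fun t _ => by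
    rw [Complex.sub_im, Complex.ofReal_im, sub_zero, hH.im_eq]; exact bcurve_nonneg _
  im_le := fun t _ => by
    rw [Complex.sub_im, Complex.ofReal_im, sub_zero, hH.im_eq]
    exact Real.arccos_le_pi_div_two.mpr (Real.exp_pos _).le
  exp_re := fun t ht => by
    rw [Complex.exp_re, Complex.sub_im, Complex.sub_re, Complex.ofReal_im, Complex.ofReal_re,
      sub_zero, hH.im_eq, bcurve, Real.cos_arccos (by linarith [Real.exp_pos (-(H t).re)])
      (Real.exp_le_one_iff.mpr (by linarith [hH.re_pos ht])), ← Real.exp_add]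
    congr 1; ring
  lim := by
    obtain ⟨R, hR0, hR⟩ := hH.re_near
    have h1 : Tendsto (fun t : ℝ => (H t).re) atTop atTop := by
      refine tendsto_atTop_mono' _ ?_ (tendsto_id.atTop_div_const (show (0 : ℝ) < 2 by norm_num))
      filter_upwards [eventually_ge_atTop R] with t ht
      have ht0 : 0 < t := hR0.trans_le ht
      have := hR t (by rw [abs_of_pos ht0]; exact ht)
      rw [abs_of_pos ht0] at this
      simp only [id]
      linarith [(abs_le.mp this).1]
    have h2 : Tendsto bcurve atTop (nhds (Real.pi / 2)) := by
      rw [← Real.arccos_zero]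
      exact (Real.continuous_arccos.tendsto 0).comp
        (Real.tendsto_exp_neg_atTop_nhds_zero)
    refine (h2.comp h1).congr fun t => ?_
    simp [hH.im_eq]

/-! ### A Phragmén–Lindelöf estimate in the right half-plane -/

/-- One-sided version of `pl_im`: the Phragmén–Lindelöf principle for
`exp (i q(w) - ε w - κ / (1 + w))`. The term with `ε` gives decay along the positive axis, the term
with `κ` dominates the part of the imaginary axis where `Im q` is not yet small; then `ε → 0`. -/
lemma pl_one {q : ℂ → ℂ} (hc : ContinuousOn q {w | 0 ≤ w.re})
    (hd : DifferentiableOn ℂ q {w | 0 < w.re})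
    (hs : ∀ ε > 0, ∃ R > 0, ∀ w : ℂ, 0 ≤ w.re → R ≤ ‖w‖ → ‖q w‖ ≤ ε * ‖w‖)
    (hb : Tendsto (fun y : ℝ => (q (y * Complex.I)).im) (cocompact ℝ) (nhds 0))
    {δ : ℝ} (hδ : 0 < δ) : ∃ R > 0, ∀ w : ℂ, 0 ≤ w.re → R ≤ ‖w‖ → -(q w).im ≤ δ := by
  have hcy : Continuous fun y : ℝ => q (y * Complex.I) := by
    rw [← continuousOn_univ]
    exact hc.comp (f := fun y : ℝ => (y : ℂ) * Complex.I) (by fun_prop) fun y _ => by simp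
  have h1 : ∀ᶠ y : ℝ in cocompact ℝ, |(q (y * Complex.I)).im| ≤ δ / 2 := by
    have := hb.eventually (Metric.closedBall_mem_nhds 0 (half_pos hδ))
    refine this.mono fun y hy => ?_
    have hy : dist (q (y * Complex.I)).im 0 ≤ δ / 2 := hy
    rwa [dist_zero_right, Real.norm_eq_abs] at hy
  rw [Metric.cobounded_eq_cocompact.symm, ← comap_norm_atTop, eventually_comap] at h1
  obtain ⟨Y, hY⟩ := eventually_atTop.mp h1
  obtain ⟨M, hM⟩ := (isCompact_Icc (a := -Y) (b := Y)).exists_bound_of_continuousOn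
    hcy.continuousOn
  set κ : ℝ := max M 0 * (1 + Y ^ 2) with hκ
  have hκ0 : 0 ≤ κ := by positivity
  have hre1 : ∀ w : ℂ, 0 ≤ w.re → 1 + w ≠ 0 := fun w hw h => by
    have := congrArg Complex.re h
    simp at this
    linarith
  have hrei : ∀ w : ℂ, 0 ≤ w.re → 0 ≤ ((1 + w)⁻¹).re := fun w hw => by
    rw [Complex.inv_re]
    refine div_nonneg ?_ (Complex.normSq_nonneg _)
    simp; linarith
  have key : ∀ ε > 0, ∀ w : ℂ, 0 ≤ w.re →
      -(q w).im - ε * w.re - κ * ((1 + w)⁻¹).re ≤ δ / 2 := by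
    intro ε hε w hw
    set f : ℂ → ℂ := fun w => Complex.exp (Complex.I * q w - ε * w - κ * (1 + w)⁻¹) with hf
    have hfn : ∀ w, ‖f w‖ = Real.exp (-(q w).im - ε * w.re - κ * ((1 + w)⁻¹).re) := fun w => by
      rw [hf]; simp only [Complex.norm_exp]
      congr 1
      simp [-Complex.inv_re]
    have hfd : DiffContOnCl ℂ f {w | 0 < w.re} := by
      refine ⟨?_, ?_⟩
      · refine DifferentiableOn.cexp (((hd.const_mul _).sub (by fun_prop)).sub ?_)
        refine DifferentiableOn.const_mul (DifferentiableOn.inv (by fun_prop) ?_) _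
        exact fun w hw => hre1 w (le_of_lt hw)
      · rw [Complex.closure_setOfPred_lt_re]
        refine ContinuousOn.cexp (((continuousOn_const.mul hc).sub (by fun_prop)).sub ?_)
        refine continuousOn_const.mul (ContinuousOn.inv₀ (by fun_prop) ?_)
        exact fun w hw => hre1 w hw
    have hbd : ‖f w‖ ≤ Real.exp (δ / 2) := by
      refine PhragmenLindelof.right_half_plane_of_tendsto_zero_on_real hfd ?_ ?_ ?_ hw
      · obtain ⟨R, -, hR⟩ := hs 1 one_pos
        refine ⟨1, by norm_num, 1, Asymptotics.IsBigO.of_bound 1 ?_⟩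
        rw [eventually_inf_principal]
        filter_upwards [tendsto_norm_cobounded_atTop.eventually_ge_atTop R] with z hz hz0
        have hz0 : 0 < z.re := hz0
        rw [hfn, Real.rpow_one, one_mul, one_mul, Real.norm_of_nonneg (Real.exp_pos _).le,
          Real.exp_le_exp]
        have h2 := hR z hz0.le hz
        have h3 := Complex.abs_im_le_norm (q z)
        have h4 := hrei z hz0.le
        have := (abs_le.mp h3).1
        nlinarith [mul_nonneg hε.le hz0.le, mul_nonneg hκ0 h4]
      · rw [tendsto_zero_iff_norm_tendsto_zero]
        obtain ⟨R, hR0, hR⟩ := hs (ε / 2) (half_pos hε)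
        have : Tendsto (fun x : ℝ => Real.exp (-(ε / 2 * x))) atTop (nhds 0) :=
          Real.tendsto_exp_neg_atTop_nhds_zero.comp
            (tendsto_id.const_mul_atTop (half_pos hε))
        refine squeeze_zero' (Eventually.of_forall fun _ => norm_nonneg _) ?_ this
        filter_upwards [eventually_ge_atTop R] with x hx
        have hx0 : 0 < x := hR0.trans_le hx
        rw [hfn, Real.exp_le_exp]
        have h2 := hR x (by simpa using hx0.le) (by rwa [Complex.norm_real,
          Real.norm_of_nonneg hx0.le])
        rw [Complex.norm_real, Real.norm_of_nonneg hx0.le] at h2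
        have h3 := (abs_le.mp (Complex.abs_im_le_norm (q x))).1
        have h4 := mul_nonneg hκ0 (hrei x (by simpa using hx0.le))
        rw [Complex.ofReal_re]
        linarith
      · intro y
        rw [hfn, Real.exp_le_exp]
        have e1 : (y * Complex.I : ℂ).re = 0 := by simp
        have e2 : ((1 + y * Complex.I : ℂ)⁻¹).re = 1 / (1 + y ^ 2) := by
          rw [Complex.inv_re, Complex.normSq_apply]; simp [pow_two]
        rw [e1, e2, mul_zero, sub_zero]
        by_cases hy : Y ≤ |y|
        · have := hY _ hy y rfl
          have := (abs_le.mp this).1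
          have : 0 ≤ κ * (1 / (1 + y ^ 2)) := by positivity
          linarith
        · push Not at hy
          have h2 := hM y (abs_le.mp hy.le)
          have h3 := (abs_le.mp (Complex.abs_im_le_norm (q (y * Complex.I)))).1
          have h4 : max M 0 ≤ κ * (1 / (1 + y ^ 2)) := by
            rw [hκ, mul_one_div, le_div_iff₀ (by positivity)]
            have : y ^ 2 ≤ Y ^ 2 := sq_le_sq' (by linarith [(abs_lt.mp hy).1]) (abs_lt.mp hy).2.le
            gcongr
          have := le_max_left M 0
          linarith
    rw [hfn, Real.exp_le_exp] at hbd
    exact hbd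
  refine ⟨2 * κ / δ + 1, by positivity, fun w hw hwn => ?_⟩
  have hw0 : 0 < ‖w‖ := lt_of_lt_of_le (by positivity) hwn
  have h2 : -(q w).im - κ * ((1 + w)⁻¹).re ≤ δ / 2 := by
    refine le_of_forall_pos_le_add fun ε hε => ?_
    have h3 := key (ε / (w.re + 1)) (by positivity) w hw
    have h4 : ε / (w.re + 1) * w.re ≤ ε := by
      rw [div_mul_eq_mul_div, div_le_iff₀ (by positivity)]
      nlinarith
    linarith
  have h3 : ((1 + w)⁻¹).re ≤ 1 / ‖w‖ := by
    refine (Complex.re_le_norm _).trans ?_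
    rw [norm_inv, ← one_div]
    refine one_div_le_one_div_of_le hw0 ?_
    rw [Complex.norm_def, Complex.norm_def, Complex.normSq_apply, Complex.normSq_apply]
    refine Real.sqrt_le_sqrt ?_
    simp
    nlinarith
  have h4 : κ * (1 / ‖w‖) ≤ δ / 2 := by
    rw [mul_one_div, div_le_iff₀ hw0]
    have : 2 * κ / δ ≤ ‖w‖ := by linarith
    rw [div_le_iff₀ hδ] at this
    linarith
  have := mul_le_mul_of_nonneg_left h3 hκ0
  linarith

/-- The two-sided version: a function on the closed right half-plane that is `o(|w|)` and whose
imaginary part tends to `0` along both ends of the imaginary axis has small imaginary part near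
infinity. -/
lemma pl_im {q : ℂ → ℂ} (hc : ContinuousOn q {w | 0 ≤ w.re})
    (hd : DifferentiableOn ℂ q {w | 0 < w.re})
    (hs : ∀ ε > 0, ∃ R > 0, ∀ w : ℂ, 0 ≤ w.re → R ≤ ‖w‖ → ‖q w‖ ≤ ε * ‖w‖)
    (hb : Tendsto (fun y : ℝ => (q (y * Complex.I)).im) (cocompact ℝ) (nhds 0))
    {δ : ℝ} (hδ : 0 < δ) : ∃ R > 0, ∀ w : ℂ, 0 ≤ w.re → R ≤ ‖w‖ → |(q w).im| ≤ δ := by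
  obtain ⟨R1, h1, hR1⟩ := pl_one hc hd hs hb hδ
  obtain ⟨R2, h2, hR2⟩ := pl_one (q := fun w => -q w) hc.neg hd.neg
    (fun ε hε => by simpa using hs ε hε) (by simpa using hb.neg) hδ
  refine ⟨max R1 R2, by positivity, fun w hw hwn => abs_le.mpr ⟨?_, ?_⟩⟩
  · linarith [hR1 w hw ((le_max_left _ _).trans hwn)]
  · have := hR2 w hw ((le_max_right _ _).trans hwn)
    simpa using this

/-! ### Imaginary part of the correction in the logarithmic strip -/

/-- The function `u(z) + (log z) / 2 - i π / 2` in the logarithmic coordinate `ξ = log z`. The closed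
upper half-plane without the origin corresponds to the strip `0 ≤ Im ξ ≤ π`. -/
noncomputable def Qs (u : ℂ → ℂ) (ξ : ℂ) : ℂ :=
  u (Complex.exp ξ) + ξ / 2 - Real.pi / 2 * Complex.I

lemma arg_one_add_mul_I (y : ℝ) : (1 + y * Complex.I).arg = Real.arctan y := by
  have h : |(1 + y * Complex.I).arg| < Real.pi / 2 :=
    Complex.abs_arg_lt_pi_div_two_iff.mpr (Or.inl (by simp))
  rw [abs_lt] at h
  rw [← Real.arctan_tan h.1 h.2, Complex.tan_arg]
  simp

namespace IsCorr

/-- `pl_im` for `q(w) = u(i w) + log (1 + w) / 2 - i π / 4`. Along the imaginary axis the limit of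
`Im u`, which is `π / 2` at `+∞` and `0` at `-∞`, is compensated by the argument of `1 + w`. -/
lemma pl_corr {u : ℂ → ℂ} (hu : IsCorr u)
    {δ : ℝ} (hδ : 0 < δ) : ∃ R > 0, ∀ w : ℂ, 0 ≤ w.re → R ≤ ‖w‖ →
    |(u (Complex.I * w) + Complex.log (1 + w) / 2 - Real.pi / 4 * Complex.I).im| ≤ δ := by
  have hsl : ∀ w : ℂ, 0 ≤ w.re → 1 + w ∈ Complex.slitPlane := fun w hw => by
    left; simp; linarith
  refine pl_im (q := fun w => u (Complex.I * w) + Complex.log (1 + w) / 2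
    - Real.pi / 4 * Complex.I) ?_ ?_ ?_ ?_ hδ
  · refine ((hu.cont.comp (by fun_prop) fun w hw => ?_).add (ContinuousOn.div_const
      (ContinuousOn.clog (by fun_prop) hsl) _)).sub continuousOn_const
    have hw' : 0 ≤ w.re := hw
    show 0 ≤ (Complex.I * w).im
    simpa using hw'
  · refine ((hu.holo.comp (by fun_prop) fun w hw => ?_).add (DifferentiableOn.div_const
      (DifferentiableOn.clog (by fun_prop) fun w hw => hsl w (le_of_lt hw)) _)).sub
      (differentiableOn_const _)
    have hw' : 0 < w.re := hw
    show 0 < (Complex.I * w).im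
    simpa using hw'
  · intro ε hε
    obtain ⟨R, hR0, hR⟩ := hu.small (ε / 4) (by positivity)
    set C : ℝ := |(ε - 1 - Real.log ε) / 2| + Real.pi with hC
    have hC0 : 0 ≤ C := by positivity
    refine ⟨max R (4 * C / ε), by positivity, fun w hw hwn => ?_⟩
    have h1 := hR (Complex.I * w) (by simpa using hw)
      (by rw [norm_mul, Complex.norm_I, one_mul]; exact (le_max_left _ _).trans hwn)
    rw [norm_mul, Complex.norm_I, one_mul] at h1
    have h2 : C ≤ ε / 4 * ‖w‖ := by
      have := (le_max_right R _).trans hwn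
      rw [div_le_iff₀ hε] at this
      linarith
    have h3 : 1 ≤ ‖1 + w‖ := by
      refine le_trans ?_ (Complex.re_le_norm _)
      simp; exact hw
    have h4 : ‖Complex.log (1 + w)‖ ≤ Real.log ‖1 + w‖ + Real.pi := by
      refine (Complex.norm_le_abs_re_add_abs_im _).trans ?_
      rw [Complex.log_re, Complex.log_im, abs_of_nonneg (Real.log_nonneg h3)]
      gcongr
      exact Complex.abs_arg_le_pi _
    have h5 : ‖1 + w‖ ≤ 1 + ‖w‖ := (norm_add_le _ _).trans (by simp)
    have h6 : Real.log ‖1 + w‖ ≤ ε * (1 + ‖w‖) - 1 - Real.log ε := by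
      have hpos : 0 < ‖1 + w‖ := by linarith
      have := Real.log_le_sub_one_of_pos (mul_pos hε hpos)
      rw [Real.log_mul hε.ne' hpos.ne'] at this
      have : ε * ‖1 + w‖ ≤ ε * (1 + ‖w‖) := by gcongr
      linarith
    have h7 : ‖Complex.log (1 + w) / 2‖ = ‖Complex.log (1 + w)‖ / 2 := by simp
    have h8 : ‖(Real.pi / 4 * Complex.I : ℂ)‖ = Real.pi / 4 := by
      simp [abs_of_pos Real.pi_pos]
    have h9 := norm_sub_le (u (Complex.I * w) + Complex.log (1 + w) / 2)
      (Real.pi / 4 * Complex.I)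
    have h10 := norm_add_le (u (Complex.I * w)) (Complex.log (1 + w) / 2)
    have h11 := le_abs_self ((ε - 1 - Real.log ε) / 2)
    have := Real.pi_pos
    linarith
  · have e : ∀ y : ℝ, (u (Complex.I * (y * Complex.I)) + Complex.log (1 + y * Complex.I) / 2
        - Real.pi / 4 * Complex.I).im = (u ((-y : ℝ) : ℂ)).im + Real.arctan y / 2
          - Real.pi / 4 := by
      intro y
      have : Complex.I * (y * Complex.I) = ((-y : ℝ) : ℂ) := by
        push_cast; rw [mul_left_comm, Complex.I_mul_I]; ring
      rw [this, ← arg_one_add_mul_I, ← Complex.log_im]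
      have h4 : (Real.pi / 4 * Complex.I : ℂ).im = Real.pi / 4 := by
        rw [show (Real.pi / 4 : ℂ) = ((Real.pi / 4 : ℝ) : ℂ) by push_cast; rfl]; simp
      have h2 : (Complex.log (1 + y * Complex.I) / 2).im
        = (Complex.log (1 + y * Complex.I)).im / 2 := by simp
      rw [Complex.sub_im, Complex.add_im, h4, h2]
    simp_rw [e]
    rw [cocompact_eq_atBot_atTop, tendsto_sup]
    constructor
    · have h1 := (hu.lim.comp tendsto_neg_atBot_atTop).add
        ((tendsto_nhds_of_tendsto_nhdsWithin Real.tendsto_arctan_atBot).div_const 2)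
      have h2 := h1.sub_const (Real.pi / 4)
      rw [show Real.pi / 2 + -(Real.pi / 2) / 2 - Real.pi / 4 = 0 by ring] at h2
      exact h2
    · have h1 := ((tendsto_nhds_of_tendsto_nhdsWithin
        Real.tendsto_arctan_atTop).div_const 2).sub_const (Real.pi / 4)
      rw [show Real.pi / 2 / 2 - Real.pi / 4 = 0 by ring] at h1
      refine h1.congr' ?_
      filter_upwards [eventually_gt_atTop 0] with y hy
      rw [hu.neg (-y) (by linarith), zero_add]

/-- This is `pl_corr` at `w = e^{ξ - iπ/2}`, since `log (1 + w) = log w + o(1)`. -/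
lemma Qs_im_small {u : ℂ → ℂ} (hu : IsCorr u)
    {δ : ℝ} (hδ : 0 < δ) : ∃ X : ℝ, ∀ ξ : ℂ, X ≤ ξ.re → 0 ≤ ξ.im →
    ξ.im ≤ Real.pi → |(Qs u ξ).im| ≤ δ := by
  obtain ⟨R, hR0, hR⟩ := hu.pl_corr (half_pos hδ)
  have hK : 0 < max (max R 2) (2 / δ) := by positivity
  refine ⟨Real.log (max (max R 2) (2 / δ)), fun ξ hX h0 h1 => ?_⟩
  set w : ℂ := Complex.exp (ξ - Real.pi / 2 * Complex.I) with hw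
  have him : (ξ - Real.pi / 2 * Complex.I).im = ξ.im - Real.pi / 2 := by
    rw [show (Real.pi / 2 : ℂ) = ((Real.pi / 2 : ℝ) : ℂ) by push_cast; rfl]; simp
  have hre : (ξ - Real.pi / 2 * Complex.I).re = ξ.re := by
    rw [show (Real.pi / 2 : ℂ) = ((Real.pi / 2 : ℝ) : ℂ) by push_cast; rfl]; simp
  have hwn : ‖w‖ = Real.exp ξ.re := by rw [hw, Complex.norm_exp, hre]
  have hwK : max (max R 2) (2 / δ) ≤ ‖w‖ := by
    rw [hwn, ← Real.exp_log hK]; exact Real.exp_le_exp.mpr hX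
  have hwR : R ≤ ‖w‖ := ((le_max_left _ _).trans (le_max_left _ _)).trans hwK
  have hw2 : 2 ≤ ‖w‖ := ((le_max_right _ _).trans (le_max_left _ _)).trans hwK
  have hwδ : 2 / δ ≤ ‖w‖ := (le_max_right _ _).trans hwK
  have hw0 : w ≠ 0 := Complex.exp_ne_zero _
  have hwre : 0 ≤ w.re := by
    rw [hw, Complex.exp_re, him]
    refine mul_nonneg (Real.exp_pos _).le (Real.cos_nonneg_of_neg_pi_div_two_le_of_le ?_ ?_) <;>
    linarith
  have hIw : Complex.I * w = Complex.exp ξ := by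
    rw [hw, Complex.exp_sub, Complex.exp_pi_div_two_mul_I]
    field_simp
  have hinv : ‖w⁻¹‖ ≤ 1 / 2 := by
    rw [norm_inv, ← one_div]; exact one_div_le_one_div_of_le two_pos hw2
  have hlogw : Complex.log w = ξ - Real.pi / 2 * Complex.I := by
    have := Real.pi_pos
    rw [hw, Complex.log_exp] <;> rw [him] <;> linarith
  have h1i : 0 < (1 + w⁻¹).re := by
    have := (abs_le.mp ((Complex.abs_re_le_norm w⁻¹).trans hinv)).1
    rw [Complex.add_re, Complex.one_re]; linarith
  have hlog : Complex.log (1 + w) = ξ - Real.pi / 2 * Complex.I + Complex.log (1 + w⁻¹) := by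
    rw [← hlogw, ← (Complex.log_mul_eq_add_log_iff hw0 ?_).mpr]
    · congr 1; field_simp; ring
    · have ha : |(1 + w⁻¹).arg| < Real.pi / 2 :=
        Complex.abs_arg_lt_pi_div_two_iff.mpr (Or.inl h1i)
      rw [abs_lt] at ha
      have hb : w.arg = ξ.im - Real.pi / 2 := by rw [← Complex.log_im, hlogw, him]
      rw [hb]
      constructor <;> linarith [ha.1, ha.2]
    · intro h; rw [h] at h1i; simp at h1i
  have hle : ‖Complex.log (1 + w⁻¹)‖ ≤ δ := by
    refine (Complex.norm_log_one_add_half_le_self hinv).trans ?_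
    rw [norm_inv, ← one_div]
    have : 1 / ‖w‖ ≤ δ / 2 := by
      rw [div_le_iff₀ hδ] at hwδ
      rw [div_le_iff₀ (by linarith)]; linarith
    linarith
  have e : Qs u ξ = (u (Complex.I * w) + Complex.log (1 + w) / 2 - Real.pi / 4 * Complex.I)
      - Complex.log (1 + w⁻¹) / 2 := by
    rw [hlog, hIw, Qs]; ring
  have h5 := hR w hwre hwR
  have h6 : |(Complex.log (1 + w⁻¹) / 2).im| ≤ δ / 2 := by
    refine (Complex.abs_im_le_norm _).trans ?_
    rw [norm_div, Complex.norm_ofNat]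
    linarith
  rw [e, Complex.sub_im]
  refine (abs_sub _ _).trans ?_
  linarith

end IsCorr

/-! ### Oscillation on vertical segments -/

lemma isOpen_strip : IsOpen {ξ : ℂ | 0 < ξ.im ∧ ξ.im < Real.pi} :=
  (isOpen_lt continuous_const Complex.continuous_im).inter
    (isOpen_lt Complex.continuous_im continuous_const)

namespace IsCorr

lemma Qs_cont {u : ℂ → ℂ} (hu : IsCorr u)
    : ContinuousOn (Qs u) {ξ | 0 ≤ ξ.im ∧ ξ.im ≤ Real.pi} := by
  refine ((hu.cont.comp Complex.continuous_exp.continuousOn fun ξ hξ => ?_).add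
    (by fun_prop)).sub continuousOn_const
  show 0 ≤ (Complex.exp ξ).im
  rw [Complex.exp_im]
  exact mul_nonneg (Real.exp_pos _).le (Real.sin_nonneg_of_nonneg_of_le_pi hξ.1 hξ.2)

lemma Qs_holo {u : ℂ → ℂ} (hu : IsCorr u)
    : DifferentiableOn ℂ (Qs u) {ξ | 0 < ξ.im ∧ ξ.im < Real.pi} := by
  refine ((hu.holo.comp Complex.differentiable_exp.differentiableOn fun ξ hξ => ?_).add
    (by fun_prop)).sub (differentiableOn_const _)
  show 0 < (Complex.exp ξ).im
  rw [Complex.exp_im]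
  exact mul_pos (Real.exp_pos _) (Real.sin_pos_of_pos_of_lt_pi hξ.1 hξ.2)

/-- Cauchy's estimate applied to `exp (i Q / δ)`, whose modulus lies between `e^{-1}` and `e` as soon
as `|Im Q| ≤ δ`. No bound on `Re Q` is needed. -/
lemma Qs_deriv {u : ℂ → ℂ} (hu : IsCorr u)
    {η : ℝ} (hη : 0 < η) : ∃ X : ℝ, ∀ ξ : ℂ, X ≤ ξ.re → ∀ d > 0, d ≤ ξ.im →
    ξ.im ≤ Real.pi - d → ‖deriv (Qs u) ξ‖ ≤ η / d := by
  set δ : ℝ := η / (2 * Real.exp 2) with hδ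
  have hδ0 : 0 < δ := by positivity
  obtain ⟨X, hX⟩ := hu.Qs_im_small hδ0
  refine ⟨X + Real.pi / 2, fun ξ hξ d hd h1 h2 => ?_⟩
  have hb : ∀ ζ ∈ Metric.closedBall ξ (d / 2), X ≤ ζ.re ∧ 0 < ζ.im ∧ ζ.im < Real.pi := by
    intro ζ hζ
    rw [mem_closedBall_iff_norm] at hζ
    have e1 := (abs_le.mp ((Complex.abs_re_le_norm (ζ - ξ)).trans hζ)).1
    have e2 := abs_le.mp ((Complex.abs_im_le_norm (ζ - ξ)).trans hζ)
    rw [Complex.sub_re] at e1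
    rw [Complex.sub_im] at e2
    refine ⟨?_, ?_, ?_⟩ <;> linarith [e2.1, e2.2]
  set f : ℂ → ℂ := fun ζ => Complex.exp (Complex.I * Qs u ζ / δ) with hf
  have hfn : ∀ ζ, ‖f ζ‖ = Real.exp (-(Qs u ζ).im / δ) := by
    intro ζ
    rw [hf, Complex.norm_exp, Complex.div_ofReal_re]
    simp
  have hfb : ∀ ζ ∈ Metric.closedBall ξ (d / 2), Real.exp (-1) ≤ ‖f ζ‖ ∧ ‖f ζ‖ ≤ Real.exp 1 := by
    intro ζ hζ
    obtain ⟨a1, a2, a3⟩ := hb ζ hζ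
    have := abs_le.mp (hX ζ a1 a2.le a3.le)
    rw [hfn]
    constructor <;> apply Real.exp_le_exp.mpr
    · rw [le_div_iff₀ hδ0]; linarith
    · rw [div_le_iff₀ hδ0]; linarith
  have hξm : ξ ∈ Metric.closedBall ξ (d / 2) := Metric.mem_closedBall_self (by positivity)
  have hQd : ∀ ζ ∈ Metric.closedBall ξ (d / 2), DifferentiableAt ℂ (Qs u) ζ := fun ζ hζ =>
    hu.Qs_holo.differentiableAt (isOpen_strip.mem_nhds (hb ζ hζ).2)
  have hfd : DifferentiableOn ℂ f (Metric.closedBall ξ (d / 2)) := fun ζ hζ =>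
    (((hQd ζ hζ).const_mul _).div_const _).cexp.differentiableWithinAt
  have hc := Complex.norm_deriv_le_of_forall_mem_sphere_norm_le (f := f) (C := Real.exp 1)
    (half_pos hd) (hfd.diffContOnCl_ball subset_rfl) (fun ζ hζ =>
      (hfb ζ (Metric.sphere_subset_closedBall hζ)).2)
  have hder : deriv f ξ = f ξ * (Complex.I * deriv (Qs u) ξ / δ) :=
    (((hQd ξ hξm).hasDerivAt.const_mul Complex.I).div_const (δ : ℂ)).cexp.deriv
  rw [hder, norm_mul, norm_div, norm_mul, Complex.norm_I, one_mul, Complex.norm_real,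
    Real.norm_of_nonneg hδ0.le] at hc
  have h3 : Real.exp (-1) * (‖deriv (Qs u) ξ‖ / δ) ≤ Real.exp 1 / (d / 2) :=
    le_trans (by gcongr; exact (hfb ξ hξm).1) hc
  have h4 : ‖deriv (Qs u) ξ‖ / δ ≤ Real.exp 2 * (2 / d) := by
    have := mul_le_mul_of_nonneg_left h3 (Real.exp_pos 1).le
    rw [← mul_assoc, ← Real.exp_add] at this
    have e2 : Real.exp 2 = Real.exp 1 * Real.exp 1 := by rw [← Real.exp_add]; norm_num
    rw [e2]
    rw [show (1 : ℝ) + -1 = 0 by norm_num, Real.exp_zero, one_mul] at this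
    exact this.trans (le_of_eq (by field_simp))
  rw [div_le_iff₀ hδ0] at h4
  refine h4.trans (le_of_eq ?_)
  rw [hδ]
  field_simp

/-- The derivative bound, integrated vertically from the midpoint of the segment, gives only
logarithmic growth at its ends. -/
lemma Qs_osc {u : ℂ → ℂ} (hu : IsCorr u)
    {η : ℝ} (hη : 0 < η) : ∃ X : ℝ, ∀ x ≥ X, ∀ y, 0 < y → y < Real.pi →
    ‖Qs u (x + y * Complex.I) - Qs u (x + (Real.pi / 2 : ℝ) * Complex.I)‖
      ≤ η * Real.log (Real.pi / (2 * min y (Real.pi - y))) := by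
  obtain ⟨X, hX⟩ := hu.Qs_deriv hη
  refine ⟨X, fun x hx => ?_⟩
  have key : ∀ σ : ℝ, (σ = 1 ∨ σ = -1) → ∀ s, 0 ≤ s → s < Real.pi / 2 →
      ‖Qs u (x + (Real.pi / 2 + σ * s : ℝ) * Complex.I)
        - Qs u (x + (Real.pi / 2 : ℝ) * Complex.I)‖
      ≤ η * (Real.log (Real.pi / 2) - Real.log (Real.pi / 2 - s)) := by
    intro σ hσ s hs0 hs
    have hσa : |σ| = 1 := by rcases hσ with rfl | rfl <;> simp
    have hpt : ∀ t : ℝ, ((x : ℂ) + (Real.pi / 2 + σ * t : ℝ) * Complex.I).re = x ∧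
        ((x : ℂ) + (Real.pi / 2 + σ * t : ℝ) * Complex.I).im = Real.pi / 2 + σ * t := by
      intro t
      generalize Real.pi / 2 + σ * t = v
      simp
    have hrange : ∀ t, 0 ≤ t → Real.pi / 2 - t ≤ Real.pi / 2 + σ * t ∧
        Real.pi / 2 + σ * t ≤ Real.pi - (Real.pi / 2 - t) := by
      intro t ht
      rcases hσ with rfl | rfl <;> constructor <;> linarith
    have hD : ∀ t, 0 ≤ t → t < Real.pi / 2 → HasDerivAt
        (fun t : ℝ => Qs u (x + (Real.pi / 2 + σ * t : ℝ) * Complex.I)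
          - Qs u (x + (Real.pi / 2 : ℝ) * Complex.I))
        (deriv (Qs u) (x + (Real.pi / 2 + σ * t : ℝ) * Complex.I) * (σ * Complex.I)) t := by
      intro t ht0 ht
      have h1 : HasDerivAt (fun t : ℝ => (x : ℂ) + (Real.pi / 2 + σ * t : ℝ) * Complex.I)
          (σ * Complex.I) t := by
        have : HasDerivAt (fun t : ℝ => Real.pi / 2 + σ * t) σ t := by
          simpa using ((hasDerivAt_id t).const_mul σ).const_add (Real.pi / 2)
        simpa using (this.ofReal_comp.mul_const Complex.I).const_add (x : ℂ)
      have h2 : DifferentiableAt ℂ (Qs u) (x + (Real.pi / 2 + σ * t : ℝ) * Complex.I) := by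
        refine hu.Qs_holo.differentiableAt (isOpen_strip.mem_nhds ?_)
        show 0 < Complex.im _ ∧ Complex.im _ < _
        rw [(hpt t).2]
        have := hrange t ht0
        constructor <;> linarith [this.1, this.2]
      exact (h2.hasDerivAt.comp t h1).sub_const _
    have hB : ∀ t < Real.pi / 2, HasDerivAt
        (fun t : ℝ => η * (Real.log (Real.pi / 2) - Real.log (Real.pi / 2 - t)))
        (η / (Real.pi / 2 - t)) t := by
      intro t ht
      have h1 : HasDerivAt (fun t : ℝ => Real.pi / 2 - t) (-1) t := by
        simpa using (hasDerivAt_id t).const_sub (Real.pi / 2)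
      have h2 := ((h1.log (by linarith)).const_sub (Real.log (Real.pi / 2))).const_mul η
      refine h2.congr_deriv ?_
      ring
    refine image_norm_le_of_norm_deriv_right_le_deriv_boundary' (a := 0) (b := s)
      (f' := fun t => deriv (Qs u) (x + (Real.pi / 2 + σ * t : ℝ) * Complex.I)
        * (σ * Complex.I))
      (B' := fun t => η / (Real.pi / 2 - t))
      (fun t ht => (hD t ht.1 (ht.2.trans_lt hs)).continuousAt.continuousWithinAt)
      (fun t ht => (hD t ht.1 (ht.2.trans hs)).hasDerivWithinAt)
      (by simp)
      (fun t ht => (hB t (ht.2.trans_lt hs)).continuousAt.continuousWithinAt)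
      (fun t ht => (hB t (ht.2.trans hs)).hasDerivWithinAt) ?_ ⟨hs0, le_rfl⟩
    intro t ht
    rw [norm_mul, norm_mul, Complex.norm_I, Complex.norm_real, Real.norm_eq_abs, hσa, mul_one,
      mul_one]
    have := hrange t ht.1
    refine hX _ (by rw [(hpt t).1]; exact hx) _ (by linarith [ht.2]) ?_ ?_ <;>
    rw [(hpt t).2]
    · exact this.1
    · exact this.2
  intro y hy0 hy1
  have hlog : ∀ d : ℝ, 0 < d → Real.log (Real.pi / (2 * d))
      = Real.log (Real.pi / 2) - Real.log d := fun d hd => by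
    rw [← Real.log_div (by positivity) hd.ne']; congr 1; field_simp
  rcases le_total y (Real.pi / 2) with h | h
  · have := key (-1) (Or.inr rfl) (Real.pi / 2 - y) (by linarith) (by linarith)
    rw [min_eq_left (by linarith), hlog y hy0]
    rwa [show Real.pi / 2 + -1 * (Real.pi / 2 - y) = y by ring,
      show Real.pi / 2 - (Real.pi / 2 - y) = y by ring] at this
  · have := key 1 (Or.inl rfl) (y - Real.pi / 2) (by linarith) (by linarith)
    rw [min_eq_right (by linarith), hlog _ (by linarith)]
    rwa [show Real.pi / 2 + 1 * (y - Real.pi / 2) = y by ring,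
      show Real.pi / 2 - (y - Real.pi / 2) = Real.pi - y by ring] at this

end IsCorr

/-! ### Contour integrals over the strip -/

/-- Cauchy's theorem on rectangles of the full height of the strip, in differential form. -/
lemma strip_deriv {F : ℂ → ℂ} (hc : ContinuousOn F {ξ | 0 ≤ ξ.im ∧ ξ.im ≤ Real.pi})
    (hd : DifferentiableOn ℂ F {ξ | 0 < ξ.im ∧ ξ.im < Real.pi}) (x : ℝ) :
    HasDerivAt (fun x : ℝ => ∫ y in (0 : ℝ)..Real.pi, F (x + y * Complex.I))
      (Complex.I * (F x - F (x + Real.pi * Complex.I))) x := by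
  have hbot : Continuous fun x : ℝ => F x :=
    hc.comp_continuous Complex.continuous_ofReal fun x => by
      show 0 ≤ Complex.im _ ∧ Complex.im _ ≤ _
      simp [Real.pi_pos.le]
  have htop : Continuous fun x : ℝ => F (x + Real.pi * Complex.I) :=
    hc.comp_continuous (by fun_prop) fun x => by
      show 0 ≤ Complex.im _ ∧ Complex.im _ ≤ _
      simp [Real.pi_pos.le]
  have hrect : ∀ B : ℝ, (∫ y in (0 : ℝ)..Real.pi, F (B + y * Complex.I))
      = (∫ y in (0 : ℝ)..Real.pi, F (x + y * Complex.I))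
        + Complex.I * ∫ s in x..B, (F s - F (s + Real.pi * Complex.I)) := by
    intro B
    have h := Complex.integral_boundary_rect_eq_zero_of_continuousOn_of_differentiableOn F
      (x : ℂ) (B + Real.pi * Complex.I) (hc.mono ?_) (hd.mono ?_)
    · have e : ∀ r : ℝ, (∫ s in x..B, F (s + (0 : ℝ) * Complex.I)) = ∫ s in x..B, F s := by
        intro r; simp
      simp only [Complex.ofReal_re, Complex.ofReal_im, Complex.add_re, Complex.add_im,
        Complex.mul_re, Complex.mul_im, Complex.I_re, Complex.I_im, mul_zero, mul_one, zero_mul,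
        sub_zero, add_zero, zero_add, Complex.ofReal_zero, smul_eq_mul] at h
      rw [intervalIntegral.integral_sub (hbot.intervalIntegrable _ _)
        (htop.intervalIntegrable _ _)]
      linear_combination (-Complex.I) * h + ((∫ y in (0 : ℝ)..Real.pi, F (B + y * Complex.I)) -
        (∫ y in (0 : ℝ)..Real.pi, F (x + y * Complex.I))) * Complex.I_mul_I
    · rintro z ⟨-, hz⟩
      have hz' : z.im ∈ uIcc 0 Real.pi := by simpa using hz
      rw [uIcc_of_le Real.pi_pos.le] at hz'
      exact hz'
    · rintro z ⟨-, hz⟩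
      have hz' : z.im ∈ Ioo (min 0 Real.pi) (max 0 Real.pi) := by simpa using hz
      rw [min_eq_left Real.pi_pos.le, max_eq_right Real.pi_pos.le] at hz'
      exact hz'
  rw [funext hrect]
  exact ((intervalIntegral.integral_hasDerivAt_right
    ((hbot.sub htop).intervalIntegrable _ _)
    ((hbot.sub htop).stronglyMeasurableAtFilter _ _)
    (hbot.sub htop).continuousAt).const_mul Complex.I).const_add _

/-- The fundamental theorem of calculus for a nonnegative derivative on `(0, b]`, with
integrability as part of the conclusion. -/
lemma integral_from_zero {V V' : ℝ → ℝ} (hV : ∀ t > 0, HasDerivAt V (V' t) t)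
    (h0 : Tendsto V (nhdsWithin 0 (Ioi 0)) (nhds 0)) (hpos : ∀ t > 0, 0 ≤ V' t) {b : ℝ}
    (hb : 0 < b) : IntervalIntegrable V' MeasureTheory.volume 0 b ∧
      ∫ t in (0 : ℝ)..b, V' t = V b := by
  have hd : ∀ t ∈ Ioo 0 b, HasDerivAt (Function.update V 0 0) (V' t) t := fun t ht =>
    (hV t ht.1).congr_of_eventuallyEq (by
      filter_upwards [lt_mem_nhds ht.1] with s hs
      rw [Function.update_of_ne hs.ne'])
  have hc : ContinuousOn (Function.update V 0 0) (Icc 0 b) := by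
    intro t ht
    rcases ht.1.eq_or_lt with rfl | h
    · rw [continuousWithinAt_update_same]
      refine h0.mono_left (nhdsWithin_mono _ ?_)
      rintro s ⟨hs, hs0⟩
      exact lt_of_le_of_ne hs.1 (Ne.symm hs0)
    · refine ContinuousAt.continuousWithinAt ?_
      refine ((hV t h).continuousAt).congr ?_
      filter_upwards [lt_mem_nhds h] with s hs
      rw [Function.update_of_ne hs.ne']
  have hi : IntervalIntegrable V' MeasureTheory.volume 0 b := by
    rw [intervalIntegrable_iff_integrableOn_Ioc_of_le hb.le]
    exact intervalIntegral.integrableOn_deriv_of_nonneg hc hd fun t ht => hpos t ht.1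
  refine ⟨hi, ?_⟩
  rw [intervalIntegral.integral_eq_sub_of_hasDerivAt_of_le hb.le hc hd hi]
  simp [Function.update_of_ne hb.ne']

lemma exp_mem {x y : ℝ} (h0 : 0 ≤ y) (h1 : y ≤ Real.pi) :
    0 ≤ (Complex.exp (x + y * Complex.I)).im := by
  rw [Complex.exp_im]
  refine mul_nonneg (Real.exp_pos _).le (Real.sin_nonneg_of_nonneg_of_le_pi ?_ ?_) <;> simpa

lemma norm_exp_add (x y : ℝ) : ‖Complex.exp (x + y * Complex.I)‖ = Real.exp x := by
  rw [Complex.norm_exp]; simp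

lemma exp_add_pi (x : ℝ) : Complex.exp (x + Real.pi * Complex.I) = ((-Real.exp x : ℝ) : ℂ) := by
  rw [Complex.exp_add, Complex.exp_pi_mul_I]; push_cast; ring

namespace IsCorr

lemma near_zero {u : ℂ → ℂ} (hu : IsCorr u)
    {ε : ℝ} (hε : 0 < ε) : ∀ᶠ x : ℝ in atBot, ∀ y ∈ Icc 0 Real.pi,
    ‖u (Complex.exp (x + y * Complex.I))‖ ≤ ε := by
  have h := hu.cont 0 (by show (0 : ℝ) ≤ Complex.im 0; simp)
  rw [Metric.continuousWithinAt_iff] at h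
  obtain ⟨ρ, hρ, h⟩ := h ε hε
  filter_upwards [Real.tendsto_exp_atBot.eventually (gt_mem_nhds hρ)] with x hx y hy
  have := h (x := Complex.exp (x + y * Complex.I)) (exp_mem hy.1 hy.2)
    (by rw [dist_zero_right, norm_exp_add]; exact hx)
  rw [hu.zero, dist_zero_right] at this
  exact this.le

lemma uexp_cont {u : ℂ → ℂ} (hu : IsCorr u)
    : ContinuousOn (fun ξ => u (Complex.exp ξ)) {ξ | 0 ≤ ξ.im ∧ ξ.im ≤ Real.pi} := by
  refine hu.cont.comp Complex.continuous_exp.continuousOn fun ξ hξ => ?_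
  show 0 ≤ (Complex.exp ξ).im
  rw [Complex.exp_im]
  exact mul_nonneg (Real.exp_pos _).le (Real.sin_nonneg_of_nonneg_of_le_pi hξ.1 hξ.2)

lemma uexp_holo {u : ℂ → ℂ} (hu : IsCorr u) : DifferentiableOn ℂ (fun ξ => u (Complex.exp ξ))
    {ξ | 0 < ξ.im ∧ ξ.im < Real.pi} := by
  refine hu.holo.comp Complex.differentiable_exp.differentiableOn fun ξ hξ => ?_
  show 0 < (Complex.exp ξ).im
  rw [Complex.exp_im]
  exact mul_pos (Real.exp_pos _) (Real.sin_pos_of_pos_of_lt_pi hξ.1 hξ.2)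

end IsCorr

/-- The real part of the integral of `u(e^ξ)` over the vertical segment of the strip at abscissa `x`. -/
noncomputable def Φ (u : ℂ → ℂ) (x : ℝ) : ℝ :=
  (∫ y in (0 : ℝ)..Real.pi, u (Complex.exp (x + y * Complex.I))).re

/-- The real part of the integral of `e^{Q(ξ)}` over the vertical segment of the strip at abscissa
`x`. -/
noncomputable def Θ (u : ℂ → ℂ) (x : ℝ) : ℝ :=
  (∫ y in (0 : ℝ)..Real.pi, Complex.exp (Qs u (x + y * Complex.I))).re

namespace IsCorr

/-- Since `Im u` vanishes on the negative axis, only the positive axis contributes. -/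
lemma Φ_deriv {u : ℂ → ℂ} (hu : IsCorr u) {t : ℝ} (ht : 0 < t) :
    HasDerivAt (fun t => -Φ u (Real.log t)) ((u t).im / t) t := by
  have h := (strip_deriv hu.uexp_cont hu.uexp_holo (Real.log t))
  have h1 : HasDerivAt (Φ u) _ (Real.log t) :=
    (Complex.reCLM.hasFDerivAt.comp_hasDerivAt _ h)
  have h2 := (h1.comp t (Real.hasDerivAt_log ht.ne')).neg
  refine h2.congr_deriv ?_
  rw [exp_add_pi, Real.exp_log ht, ← Complex.ofReal_exp, Real.exp_log ht]
  have := hu.neg (-t) (by linarith)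
  simp only [Complex.reCLM_apply, Complex.mul_re, Complex.I_re, Complex.I_im, Complex.sub_im,
    this]
  field_simp
  ring

/-- The boundary values of `e^Q` over `t` and `-t` are `-i √t e^{u(t)}` and a real number, so the
relation `Re e^{u(t)} = e^{-t}` determines the derivative. -/
lemma Θ_deriv {u : ℂ → ℂ} (hu : IsCorr u) {t : ℝ} (ht : 0 < t) :
    HasDerivAt (fun t => Θ u (Real.log t)) (Real.exp (-t) * t ^ ((1 / 2 : ℝ) - 1)) t := by
  have h := (strip_deriv hu.Qs_cont.cexp hu.Qs_holo.cexp (Real.log t))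
  have h1 : HasDerivAt (Θ u) _ (Real.log t) :=
    (Complex.reCLM.hasFDerivAt.comp_hasDerivAt _ h)
  have h2 := (h1.comp t (Real.hasDerivAt_log ht.ne'))
  refine h2.congr_deriv ?_
  have hI : Complex.exp (-(Real.pi / 2 * Complex.I)) = -Complex.I := by
    rw [Complex.exp_neg, Complex.exp_pi_div_two_mul_I, Complex.inv_I]
  have e1 : Complex.exp (Qs u (Real.log t))
      = -Complex.I * (Complex.exp (u t) * (t ^ (1 / 2 : ℝ) : ℝ)) := by
    rw [Qs, sub_eq_add_neg, Complex.exp_add, Complex.exp_add, hI, ← Complex.ofReal_exp,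
      Real.exp_log ht, Real.rpow_def_of_pos ht, Complex.ofReal_exp]
    push_cast
    ring_nf
  have e2 : Complex.exp (Qs u (Real.log t + Real.pi * Complex.I))
      = ((Real.exp (u (-t : ℝ)).re * t ^ (1 / 2 : ℝ) : ℝ) : ℂ) := by
    have hr : u (-t : ℝ) = ((u (-t : ℝ)).re : ℂ) :=
      Complex.ext (by simp) (by simpa using hu.neg (-t) (by linarith))
    rw [Qs, exp_add_pi, Real.exp_log ht, show u (-t : ℝ) + ((Real.log t : ℝ)
        + Real.pi * Complex.I) / 2 - Real.pi / 2 * Complex.I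
        = u (-t : ℝ) + (Real.log t * (1 / 2) : ℝ) by push_cast; ring, Complex.exp_add,
        ← Complex.ofReal_exp, ← Real.rpow_def_of_pos ht, Complex.ofReal_mul, Complex.ofReal_exp,
        ← hr]
  rw [e1, e2]
  simp only [Complex.reCLM_apply]
  have e3 : (Complex.I * (-Complex.I * (Complex.exp (u t) * (t ^ (1 / 2 : ℝ) : ℝ))
      - ((Real.exp (u (-t : ℝ)).re * t ^ (1 / 2 : ℝ) : ℝ) : ℂ))).re
      = Real.exp (-t) * t ^ (1 / 2 : ℝ) := by
    rw [← hu.exp_re t ht, mul_sub, Complex.sub_re, ← mul_assoc, mul_neg, Complex.I_mul_I, neg_neg,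
      one_mul, Complex.re_mul_ofReal, Complex.re_mul_ofReal]
    simp
  rw [e3, Real.rpow_sub ht, Real.rpow_one]
  field_simp

lemma Φ_zero {u : ℂ → ℂ} (hu : IsCorr u) : Tendsto (Φ u) atBot (nhds 0) := by
  rw [Metric.tendsto_nhds]
  intro ε hε
  filter_upwards [hu.near_zero (show 0 < ε / 4 by positivity)] with x hx
  rw [dist_zero_right, Real.norm_eq_abs]
  have h := intervalIntegral.norm_integral_le_of_norm_le_const (a := 0) (b := Real.pi)
    (f := fun y : ℝ => u (Complex.exp (x + y * Complex.I))) (C := ε / 4) fun y hy => by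
      rw [uIoc_of_le Real.pi_pos.le] at hy
      exact hx y ⟨hy.1.le, hy.2⟩
  rw [sub_zero, abs_of_pos Real.pi_pos] at h
  refine ((Complex.abs_re_le_norm _).trans h).trans_lt ?_
  nlinarith [Real.pi_lt_four]

lemma Θ_zero {u : ℂ → ℂ} (hu : IsCorr u) : Tendsto (Θ u) atBot (nhds 0) := by
  have hb : Tendsto (fun x : ℝ => Real.exp 1 * Real.exp (x / 2) * Real.pi) atBot (nhds 0) := by
    have := ((Real.tendsto_exp_atBot.comp
      (tendsto_id.atBot_div_const (show (0 : ℝ) < 2 by norm_num))).const_mul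
      (Real.exp 1)).mul_const Real.pi
    simpa using this
  refine squeeze_zero_norm' ?_ hb
  filter_upwards [hu.near_zero one_pos] with x hx
  have h := intervalIntegral.norm_integral_le_of_norm_le_const (a := 0) (b := Real.pi)
    (f := fun y : ℝ => Complex.exp (Qs u (x + y * Complex.I)))
    (C := Real.exp 1 * Real.exp (x / 2)) fun y hy => by
      rw [uIoc_of_le Real.pi_pos.le] at hy
      have h1 := (Complex.re_le_norm _).trans (hx y ⟨hy.1.le, hy.2⟩)
      rw [Complex.norm_exp, ← Real.exp_add]
      refine Real.exp_le_exp.mpr ?_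
      have : (Qs u (x + y * Complex.I)).re
          = (u (Complex.exp (x + y * Complex.I))).re + x / 2 := by
        rw [Qs, show (Real.pi / 2 : ℂ) = ((Real.pi / 2 : ℝ) : ℂ) by push_cast; rfl]; simp
      linarith
  rw [sub_zero, abs_of_pos Real.pi_pos] at h
  exact (Complex.abs_re_le_norm _).trans h

/-- The total increment of `Θ` is the integral `Γ(1/2) = √π`. -/
lemma Θ_top {u : ℂ → ℂ} (hu : IsCorr u) : Tendsto (Θ u) atTop (nhds (Real.sqrt Real.pi)) := by
  have h1 : ∀ b > 0, ∫ t in (0 : ℝ)..b, Real.exp (-t) * t ^ ((1 / 2 : ℝ) - 1)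
      = Θ u (Real.log b) := fun b hb =>
    (integral_from_zero (fun t ht => hu.Θ_deriv ht) (hu.Θ_zero.comp Real.tendsto_log_nhdsGT_zero)
      (fun t ht => by positivity) hb).2
  have h2 := MeasureTheory.intervalIntegral_tendsto_integral_Ioi 0
    (Real.GammaIntegral_convergent (show (0 : ℝ) < 1 / 2 by norm_num)) Real.tendsto_exp_atTop
  rw [← Real.Gamma_eq_integral (by norm_num), Real.Gamma_one_half_eq] at h2
  refine h2.congr fun x => ?_
  rw [h1 _ (Real.exp_pos x), Real.log_exp]

end IsCorr

/-! ### Value of the integral -/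

/-- The deviation of `Q` on the vertical segment at abscissa `x` from its value at the midpoint. -/
noncomputable def Qosc (u : ℂ → ℂ) (x y : ℝ) : ℂ :=
  Qs u (x + y * Complex.I) - Qs u (x + (Real.pi / 2 : ℝ) * Complex.I)

/-- An integrable majorant of `(π / (2 min (y, π - y))) ^ (1/2)`, the exponential of the bound of
`Qs_osc` with `η = 1/2`. -/
noncomputable def oscBound (y : ℝ) : ℝ :=
  (Real.pi / 2) ^ (1 / 2 : ℝ) * (y ^ (-(1 / 2) : ℝ) + (Real.pi - y) ^ (-(1 / 2) : ℝ))

lemma oscBound_integrable : IntervalIntegrable oscBound MeasureTheory.volume 0 Real.pi := by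
  have h1 : IntervalIntegrable (fun y : ℝ => y ^ (-(1 / 2) : ℝ)) MeasureTheory.volume 0 Real.pi :=
    intervalIntegral.intervalIntegrable_rpow' (by norm_num)
  have h2 := (h1.comp_sub_left Real.pi).symm
  rw [sub_self, sub_zero] at h2
  exact (h1.add h2).const_mul _

lemma oscBound_ge {y : ℝ} (h0 : 0 < y) (h1 : y < Real.pi) :
    Real.exp (1 / 2 * Real.log (Real.pi / (2 * min y (Real.pi - y)))) ≤ oscBound y := by
  have hd : 0 < min y (Real.pi - y) := lt_min h0 (by linarith)
  have hp : 0 < Real.pi / (2 * min y (Real.pi - y)) := by positivity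
  rw [mul_comm, ← Real.rpow_def_of_pos hp, oscBound,
    show Real.pi / (2 * min y (Real.pi - y)) = Real.pi / 2 * (min y (Real.pi - y))⁻¹ by
      field_simp, Real.mul_rpow (by positivity) (by positivity), Real.inv_rpow hd.le,
    ← Real.rpow_neg hd.le]
  gcongr
  have a1 : 0 ≤ y ^ (-(1 / 2) : ℝ) := by positivity
  have a2 : 0 ≤ (Real.pi - y) ^ (-(1 / 2) : ℝ) := Real.rpow_nonneg (by linarith) _
  rcases min_choice y (Real.pi - y) with h | h <;> rw [h] <;> linarith

lemma ae_Ioo {p : ℝ → Prop} (h : ∀ y, 0 < y → y < Real.pi → p y) :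
    ∀ᵐ y ∂MeasureTheory.volume, y ∈ uIoc 0 Real.pi → p y := by
  have : ∀ᵐ y : ℝ ∂MeasureTheory.volume, y ≠ Real.pi := by
    simp [MeasureTheory.ae_iff]
  filter_upwards [this] with y hy hy'
  rw [uIoc_of_le Real.pi_pos.le] at hy'
  exact h y hy'.1 (lt_of_le_of_ne hy'.2 hy)

namespace IsCorr

lemma Qosc_cont {u : ℂ → ℂ} (hu : IsCorr u) (x : ℝ) : ContinuousOn (Qosc u x) (Icc 0 Real.pi) := by
  refine ContinuousOn.sub (hu.Qs_cont.comp (by fun_prop) fun y hy => ?_) continuousOn_const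
  show 0 ≤ Complex.im _ ∧ Complex.im _ ≤ _
  simpa using hy

lemma Qosc_le {u : ℂ → ℂ} (hu : IsCorr u) : ∀ᶠ x in atTop, ∀ y, 0 < y → y < Real.pi →
    ‖Qosc u x y‖ ≤ 1 / 2 * Real.log (Real.pi / (2 * min y (Real.pi - y))) := by
  obtain ⟨X, hX⟩ := hu.Qs_osc (show (0 : ℝ) < 1 / 2 by norm_num)
  filter_upwards [eventually_ge_atTop X] with x hx y h0 h1 using hX x hx y h0 h1

lemma Qosc_tendsto {u : ℂ → ℂ} (hu : IsCorr u) {y : ℝ} (h0 : 0 < y) (h1 : y < Real.pi) :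
    Tendsto (fun x => Qosc u x y) atTop (nhds 0) := by
  rw [Metric.tendsto_nhds]
  intro ε hε
  set L := Real.log (Real.pi / (2 * min y (Real.pi - y)))
  obtain ⟨X, hX⟩ := hu.Qs_osc (show (0 : ℝ) < ε / (2 * (|L| + 1)) by positivity)
  filter_upwards [eventually_ge_atTop X] with x hx
  rw [dist_zero_right]
  refine (hX x hx y h0 h1).trans_lt ?_
  have : ε / (2 * (|L| + 1)) * L ≤ ε / (2 * (|L| + 1)) * (|L| + 1) := by
    gcongr; linarith [le_abs_self L]
  refine this.trans_lt ?_
  rw [show ε / (2 * (|L| + 1)) * (|L| + 1) = ε / 2 by field_simp]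
  linarith

lemma Qosc_int {u : ℂ → ℂ} (hu : IsCorr u)
    : Tendsto (fun x => ∫ y in (0 : ℝ)..Real.pi, Qosc u x y) atTop (nhds 0) := by
  have h := intervalIntegral.tendsto_integral_filter_of_dominated_convergence (l := atTop)
    (F := Qosc u) (f := fun _ => 0) (a := 0) (b := Real.pi) oscBound ?_ ?_ oscBound_integrable
    (ae_Ioo fun y h0 h1 => hu.Qosc_tendsto h0 h1)
  · simpa using h
  · refine Eventually.of_forall fun x => ?_
    rw [uIoc_of_le Real.pi_pos.le]
    exact ((hu.Qosc_cont x).mono Ioc_subset_Icc_self).aestronglyMeasurable measurableSet_Ioc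
  · filter_upwards [hu.Qosc_le] with x hx
    refine ae_Ioo fun y h0 h1 => ?_
    refine le_trans ?_ (oscBound_ge h0 h1)
    have := Real.add_one_le_exp (1 / 2 * Real.log (Real.pi / (2 * min y (Real.pi - y))))
    linarith [hx y h0 h1]

lemma Qosc_exp_int {u : ℂ → ℂ} (hu : IsCorr u)
    : Tendsto (fun x => ∫ y in (0 : ℝ)..Real.pi, Complex.exp (Qosc u x y)) atTop
    (nhds Real.pi) := by
  have h := intervalIntegral.tendsto_integral_filter_of_dominated_convergence (l := atTop)
    (F := fun x y => Complex.exp (Qosc u x y)) (f := fun _ => 1) (a := 0) (b := Real.pi)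
    oscBound ?_ ?_ oscBound_integrable
    (ae_Ioo fun y h0 h1 => by simpa using (hu.Qosc_tendsto h0 h1).cexp)
  · simpa using h
  · refine Eventually.of_forall fun x => ?_
    rw [uIoc_of_le Real.pi_pos.le]
    exact ((hu.Qosc_cont x).mono Ioc_subset_Icc_self).cexp.aestronglyMeasurable measurableSet_Ioc
  · filter_upwards [hu.Qosc_le] with x hx
    refine ae_Ioo fun y h0 h1 => ?_
    refine le_trans ?_ (oscBound_ge h0 h1)
    rw [Complex.norm_exp]
    exact Real.exp_le_exp.mpr ((Complex.re_le_norm _).trans (hx y h0 h1))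

lemma Qmid_im {u : ℂ → ℂ} (hu : IsCorr u)
    : Tendsto (fun x : ℝ => (Qs u (x + (Real.pi / 2 : ℝ) * Complex.I)).im) atTop
    (nhds 0) := by
  rw [Metric.tendsto_nhds]
  intro ε hε
  obtain ⟨X, hX⟩ := hu.Qs_im_small (half_pos hε)
  filter_upwards [eventually_ge_atTop X] with x hx
  rw [dist_zero_right, Real.norm_eq_abs]
  have hi : ((x : ℂ) + (Real.pi / 2 : ℝ) * Complex.I).im = Real.pi / 2 := by
    generalize Real.pi / 2 = v; simp
  have hr : ((x : ℂ) + (Real.pi / 2 : ℝ) * Complex.I).re = x := by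
    generalize Real.pi / 2 = v; simp
  have := Real.pi_pos
  refine (hX _ (by rw [hr]; exact hx) (by rw [hi]; linarith) (by rw [hi]; linarith)).trans_lt ?_
  linarith

/-- `Θ` equals `exp (Re Q)` at the midpoint times `π + o(1)`, and tends to `√π`. -/
lemma Qmid_re {u : ℂ → ℂ} (hu : IsCorr u)
    : Tendsto (fun x : ℝ => (Qs u (x + (Real.pi / 2 : ℝ) * Complex.I)).re) atTop
    (nhds (-(Real.log Real.pi / 2))) := by
  set q : ℝ → ℂ := fun x => Qs u (x + (Real.pi / 2 : ℝ) * Complex.I) with hq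
  set J : ℝ → ℂ := fun x => ∫ y in (0 : ℝ)..Real.pi, Complex.exp (Qosc u x y)
  have hΘ : ∀ x, Θ u x = Real.exp (q x).re *
      (Complex.exp (((q x).im : ℝ) * Complex.I) * J x).re := by
    intro x
    have : (∫ y in (0 : ℝ)..Real.pi, Complex.exp (Qs u (x + y * Complex.I)))
        = Complex.exp (q x) * J x := by
      rw [← intervalIntegral.integral_const_mul]
      refine intervalIntegral.integral_congr fun y _ => ?_
      simp only [Qosc, hq, ← Complex.exp_add]
      congr 1; ring
    rw [Θ, this]
    conv_lhs => rw [← Complex.re_add_im (q x), Complex.exp_add, mul_assoc, ← Complex.ofReal_exp,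
      Complex.re_ofReal_mul]
  have h1 : Tendsto (fun x => (Complex.exp (((q x).im : ℝ) * Complex.I) * J x).re) atTop
      (nhds Real.pi) := by
    have hi : Tendsto (fun x => (((q x).im : ℝ) : ℂ)) atTop (nhds ((0 : ℝ) : ℂ)) :=
      (Complex.continuous_ofReal.tendsto _).comp hu.Qmid_im
    have := (hi.mul_const Complex.I).cexp.mul hu.Qosc_exp_int
    have h3 := (Complex.continuous_re.tendsto _).comp this
    have e : (Complex.exp (((0 : ℝ) : ℂ) * Complex.I) * (Real.pi : ℂ)).re = Real.pi := by simp
    rw [e] at h3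
    exact h3
  have h2 := (hu.Θ_top.div h1 Real.pi_ne_zero).log (by positivity)
  rw [Real.log_div (by positivity) Real.pi_ne_zero, Real.log_sqrt Real.pi_pos.le] at h2
  rw [show -(Real.log Real.pi / 2) = Real.log Real.pi / 2 - Real.log Real.pi by ring]
  refine h2.congr' ?_
  filter_upwards [h1.eventually (lt_mem_nhds Real.pi_pos)] with x hx
  rw [Pi.div_apply, hΘ, mul_div_cancel_right₀ _ hx.ne', Real.log_exp]

/-- The real part of `u(e^ξ)` is that of `Q(ξ) - ξ / 2`, and `Q` may be replaced by its value at the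
midpoint up to `o(1)`. -/
lemma Φ_top {u : ℂ → ℂ} (hu : IsCorr u) : Tendsto (fun x => -Φ u x - Real.pi / 2 * x) atTop
    (nhds (Real.pi / 2 * Real.log Real.pi)) := by
  have h1 := ((hu.Qmid_re.const_mul Real.pi).add
    ((Complex.continuous_re.tendsto _).comp hu.Qosc_int)).neg
  rw [show Real.pi / 2 * Real.log Real.pi
    = -(Real.pi * -(Real.log Real.pi / 2) + (0 : ℂ).re) by simp; ring]
  refine h1.congr fun x => ?_
  have e : (∫ y in (0 : ℝ)..Real.pi, u (Complex.exp (x + y * Complex.I)))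
      = (∫ y in (0 : ℝ)..Real.pi, Qosc u x y) + ∫ y in (0 : ℝ)..Real.pi,
        (Qs u (x + (Real.pi / 2 : ℝ) * Complex.I) - (x : ℂ) / 2
          + ((Real.pi / 2 - y / 2 : ℝ) : ℂ) * Complex.I) := by
    rw [← intervalIntegral.integral_add]
    · refine intervalIntegral.integral_congr fun y _ => ?_
      simp only [Qosc]
      generalize Qs u (x + (Real.pi / 2 : ℝ) * Complex.I) = w
      simp only [Qs]
      push_cast
      ring
    · refine ContinuousOn.intervalIntegrable ?_
      rw [uIcc_of_le Real.pi_pos.le]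
      exact hu.Qosc_cont x
    · exact Continuous.intervalIntegrable (by fun_prop) _ _
  have e2 : (∫ y in (0 : ℝ)..Real.pi, (Qs u (x + (Real.pi / 2 : ℝ) * Complex.I) - (x : ℂ) / 2
          + ((Real.pi / 2 - y / 2 : ℝ) : ℂ) * Complex.I))
      = Real.pi * (Qs u (x + (Real.pi / 2 : ℝ) * Complex.I) - (x : ℂ) / 2)
        + ((∫ y in (0 : ℝ)..Real.pi, (Real.pi / 2 - y / 2) : ℝ) : ℂ) * Complex.I := by
    rw [intervalIntegral.integral_add (Continuous.intervalIntegrable (by fun_prop) _ _)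
      (Continuous.intervalIntegrable (by fun_prop) _ _), intervalIntegral.integral_const,
      intervalIntegral.integral_mul_const, intervalIntegral.integral_ofReal]
    simp
  rw [Φ, e, e2]
  generalize (∫ y in (0 : ℝ)..Real.pi, (Real.pi / 2 - y / 2)) = v
  simp only [Function.comp]
  rw [Complex.add_re, Complex.add_re, Complex.re_ofReal_mul, Complex.sub_re]
  simp
  ring

/-- On `(0, 2)` the integrand is the derivative of `-Φ(log t)`, on `(2, ∞)` that of
`-Φ(log t) - (π / 2) log t`; it has constant sign on both intervals, hence is integrable. -/
lemma integral_eq {u : ℂ → ℂ} (hu : IsCorr u) : ∫ t in Ioi (0 : ℝ),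
    ((u t).im - (Real.pi / 2) * indicator (Ici (2 : ℝ)) (fun _ => 1) t) / t
      = Real.pi / 2 * Real.log (2 * Real.pi) := by
  set h : ℝ → ℝ := fun t =>
    ((u t).im - (Real.pi / 2) * indicator (Ici (2 : ℝ)) (fun _ => 1) t) / t with hh
  obtain ⟨i1, v1⟩ := integral_from_zero (fun t ht => hu.Φ_deriv ht)
    (by simpa using (hu.Φ_zero.comp Real.tendsto_log_nhdsGT_zero).neg)
    (fun t ht => div_nonneg (hu.im_nonneg t ht) (le_of_lt ht)) (b := 2) two_pos
  have hder : ∀ t ∈ Ici (2 : ℝ), HasDerivAt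
      (fun t => -Φ u (Real.log t) - Real.pi / 2 * Real.log t)
      (((u t).im - Real.pi / 2) / t) t := by
    intro t ht
    have ht0 : 0 < t := lt_of_lt_of_le two_pos ht
    refine ((hu.Φ_deriv ht0).sub ((Real.hasDerivAt_log ht0.ne').const_mul _)).congr_deriv ?_
    field_simp
  have hneg : ∀ t ∈ Ioi (2 : ℝ), ((u t).im - Real.pi / 2) / t ≤ 0 := fun t ht => by
    have ht0 : 0 < t := two_pos.trans ht
    exact div_nonpos_of_nonpos_of_nonneg (by linarith [hu.im_le t ht0]) ht0.le
  have hlim := hu.Φ_top.comp Real.tendsto_log_atTop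
  have i2 := MeasureTheory.integrableOn_Ioi_deriv_of_nonpos' hder hneg hlim
  have v2 := MeasureTheory.integral_Ioi_of_hasDerivAt_of_nonpos' hder hneg hlim
  have c1 : ∀ᵐ t ∂MeasureTheory.volume, t ∈ Ioc (0 : ℝ) 2 → h t = (u t).im / t := by
    have : ∀ᵐ t : ℝ ∂MeasureTheory.volume, t ≠ 2 := by simp [MeasureTheory.ae_iff]
    filter_upwards [this] with t ht ht'
    have : t ∉ Ici (2 : ℝ) := fun h => ht (le_antisymm ht'.2 h)
    rw [hh]; simp [indicator_of_notMem this]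
  have c2 : ∀ t ∈ Ioi (2 : ℝ), h t = ((u t).im - Real.pi / 2) / t := by
    intro t ht
    have : t ∈ Ici (2 : ℝ) := mem_Ici.mpr (le_of_lt ht)
    rw [hh]; simp [indicator_of_mem this]
  rw [intervalIntegrable_iff_integrableOn_Ioc_of_le zero_le_two] at i1
  rw [intervalIntegral.integral_of_le zero_le_two] at v1
  have j1 : MeasureTheory.IntegrableOn h (Ioc 0 2) :=
    i1.congr (((MeasureTheory.ae_restrict_iff' measurableSet_Ioc).mpr
      (c1.mono fun t ht hm => (ht hm).symm)))
  have j2 : MeasureTheory.IntegrableOn h (Ioi 2) :=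
    i2.congr_fun (fun t ht => (c2 t ht).symm) measurableSet_Ioi
  rw [← Ioc_union_Ioi_eq_Ioi zero_le_two, MeasureTheory.setIntegral_union
    (Ioc_disjoint_Ioi le_rfl) measurableSet_Ioi j1 j2,
    MeasureTheory.setIntegral_congr_ae measurableSet_Ioc c1, v1,
    MeasureTheory.setIntegral_congr_fun measurableSet_Ioi c2, v2,
    Real.log_mul two_ne_zero Real.pi_ne_zero]
  ring

end IsCorr

/-! ### The limit -/

/-- The asymptotics of the error term of Theorem 1 in the form
`lim_{m→∞} √m ((1+a)/(1-a))^m L_m(a) = e^{-c} √2 (1-a)/√a`, where `c` is the integral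
built from the normalized conformal map `H` of the upper half-plane onto `Ω*`. -/
theorem error_asymptotics_via_integral (H : ℂ → ℂ)
    (hcont : ContinuousOn H (closure UHP))
    (hmaps : MapsTo H (closure UHP) (closure Ωstar))
    (hholo : DifferentiableOn ℂ H UHP)
    (hbij : BijOn H UHP Ωstar)
    (h0 : H 0 = 0)
    (hlim : Tendsto (fun z => H z / z) (comap (fun z : ℂ => ‖z‖) atTop ⊓ principal UHP)
      (nhds 1))
    (c : ℝ)
    (hc : c = (1 / Real.pi) * ∫ t in Ioi (0 : ℝ),
        ((H t).im - (Real.pi / 2) * indicator (Ici (2 : ℝ)) (fun _ => 1) t) / t)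
    (a : ℝ) (ha0 : 0 < a) (ha1 : a < 1) :
    Tendsto (fun m : ℕ => Real.sqrt m * ((1 + a) / (1 - a)) ^ m * Lm m a)
      atTop (nhds (Real.exp (-c) * Real.sqrt 2 * (1 - a) / Real.sqrt a)) := by
  have hN : IsNormMap H := ⟨hcont, hmaps, hholo, hbij, h0, hlim⟩
  have hi := hN.isCorr.integral_eq
  simp only [Complex.sub_im, Complex.ofReal_im, sub_zero] at hi
  have hpi := Real.pi_pos
  have hc' : c = Real.log √(2 * Real.pi) := by
    rw [hc, hi, Real.log_sqrt (by positivity)]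
    field_simp
  have he : Real.exp (-c) * √2 = (√Real.pi)⁻¹ := by
    rw [hc', Real.exp_neg, Real.exp_log (by positivity), Real.sqrt_mul (by norm_num)]
    field_simp
  convert Lm_asymp ha0 ha1 using 2
  rw [he, div_mul_eq_div_div, div_eq_inv_mul (1 - a)]
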